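/- arXiv:1302.0084 — 4 statements merged into one kernel-verified Lean document; each statement's English description precedes it below -/
import Mathlib

section
/- Fix P > 0 and ε ∈ (0,1), and let (A_n) be a sequence of positive reals with A_n → ∞. Then there exists a sequence of (n, M_n, ε, P) codes for the AWGN channel all of whose codewords x additionally satisfy the amplitude constraint ‖x‖_∞ ≤ A_n, such that (1/n) ln M_n → (1/2) ln(1+P) as n → ∞. -/
open MeasureTheory ProbabilityTheory Filter

/-- The law of the noise vector `Z^n`: the `n`-fold product of standard Gaussians `N(0,1)`. -/
noncomputable def stdGaussianPi (n : ℕ) : Measure (Fin n → ℝ) :=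
  Measure.pi fun _ => gaussianReal 0 1



theorem feinstein_aux {E : Type*} [MeasurableSpace E] (W : E → Measure E)
    [∀ x, IsProbabilityMeasure (W x)] (Q : Measure E) [IsFiniteMeasure Q]
    (S : Set E) (D : E → Set E) (hD : ∀ x, MeasurableSet (D x)) (a b s : ℝ)
    (h1 : ∀ x ∈ S, 1 - a ≤ (W x).real (D x))
    (h2 : ∀ x ∈ S, Q.real (D x) ≤ b)
    (h3 : ∀ U, MeasurableSet U → (∀ x ∈ S, a ≤ (W x).real U) → s ≤ Q.real U) (x₀ : E) (hb : 0 ≤ b) :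
    ∀ M : ℕ, M * b < s → ∃ f : ℕ → E, ∃ g : E → ℕ, Measurable g ∧
      Q.real {y | g y < M} ≤ M * b ∧
      ∀ i < M, f i ∈ S ∧ 1 - 2 * a ≤ (W (f i)).real {y | g y = i} := by
  intro M
  induction M with
  | zero =>
    intro _
    exact ⟨fun _ => x₀, fun _ => 0, measurable_const, by simp, by simp⟩
  | succ M ih =>
    intro hM
    have hM' : M * b < s := by push_cast at hM; nlinarith
    obtain ⟨f, g, hg, hQ, hfg⟩ := ih hM'
    set U := {y | g y < M} with hU
    have hUm : MeasurableSet U := measurableSet_lt hg measurable_const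
    have : ∃ x ∈ S, (W x).real U < a := by
      by_contra! hcon
      linarith [h3 U hUm hcon]
    obtain ⟨x, hxS, hx⟩ := this
    classical
    refine ⟨Function.update f M x, fun y => if y ∈ U then g y else if y ∈ D x then M else M + 1,
      ?_, ?_, ?_⟩
    · exact Measurable.ite hUm hg (Measurable.ite (hD x) measurable_const measurable_const)
    · calc Q.real {y | (if y ∈ U then g y else if y ∈ D x then M else M + 1) < M + 1}
          ≤ Q.real (U ∪ D x) := by
            refine measureReal_mono ?_
            intro y hy
            simp only [Set.mem_ofPred_eq] at hy
            by_cases hyU : y ∈ U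
            · exact Or.inl hyU
            · by_cases hyD : y ∈ D x
              · exact Or.inr hyD
              · simp [hyU, hyD] at hy
        _ ≤ Q.real U + Q.real (D x) := measureReal_union_le _ _
        _ ≤ (M + 1 : ℕ) * b := by push_cast; linarith [h2 x hxS]
    · intro i hi
      rcases Nat.lt_succ_iff_lt_or_eq.mp hi with hi | rfl
      · rw [Function.update_of_ne hi.ne]
        refine ⟨(hfg i hi).1, (hfg i hi).2.trans (measureReal_mono ?_)⟩
        intro y hy
        simp only [Set.mem_ofPred_eq] at hy ⊢
        have : y ∈ U := by simp [hU, hy, hi]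
        simp [this, hy]
      · rw [Function.update_self]
        refine ⟨hxS, ?_⟩
        have h4 : (W x).real (D x) ≤ (W x).real (D x \ U) + (W x).real U :=
          (measureReal_mono (by intro y hy; by_cases h : y ∈ U <;> simp [h, hy])).trans
            (measureReal_union_le _ _)
        have h5 : (W x).real (D x \ U) ≤
            (W x).real {y | (if y ∈ U then g y else if y ∈ D x then i else i + 1) = i} := by
          refine measureReal_mono ?_
          intro y hy
          simp [hy.1, hy.2]
        linarith [h1 x hxS]

theorem pi_conv_aux (n : ℕ) (μ ν : Measure ℝ) [IsProbabilityMeasure μ] [IsProbabilityMeasure ν] :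
    (Measure.pi fun _ : Fin n => μ).conv (Measure.pi fun _ : Fin n => ν) =
      Measure.pi fun _ : Fin n => μ.conv ν := by
  symm
  apply Measure.pi_eq
  intro s hs
  have hm : Measurable fun p : (Fin n → ℝ) × (Fin n → ℝ) => p.1 + p.2 := by fun_prop
  rw [Measure.conv, Measure.map_apply hm (MeasurableSet.univ_pi hs)]
  have := measurePreserving_arrowProdEquivProdArrow ℝ ℝ (Fin n) (fun _ => μ) (fun _ => ν)
  rw [← this.map_eq, Measure.map_apply (MeasurableEquiv.measurable _) (hm (MeasurableSet.univ_pi hs))]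
  have h2 : (MeasurableEquiv.arrowProdEquivProdArrow ℝ ℝ (Fin n)) ⁻¹'
      ((fun p : (Fin n → ℝ) × (Fin n → ℝ) => p.1 + p.2) ⁻¹' (Set.univ.pi s)) =
      Set.univ.pi fun i => (fun p : ℝ × ℝ => p.1 + p.2) ⁻¹' (s i) := by
    ext w
    simp [MeasurableEquiv.arrowProdEquivProdArrow, Equiv.arrowProdEquivProdArrow, Set.mem_pi]
  rw [h2, Measure.pi_pi]
  refine Finset.prod_congr rfl fun i _ => ?_
  rw [Measure.conv, Measure.map_apply (by fun_prop) (hs i)]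

theorem pi_cond_le (n : ℕ) (μ : Measure ℝ) [IsProbabilityMeasure μ] (s : Set ℝ)
    (hμ : μ s ≠ 0) :
    (Measure.pi fun _ : Fin n => ProbabilityTheory.cond μ s) ≤
      ((μ s)⁻¹) ^ n • (Measure.pi fun _ : Fin n => μ) := by
  have : (Measure.pi fun _ : Fin n => ProbabilityTheory.cond μ s) =
      ((μ s)⁻¹) ^ n • (Measure.pi fun _ : Fin n => μ).restrict (Set.univ.pi fun _ => s) := by
    have := cond_isProbabilityMeasure hμ
    apply Measure.pi_eq
    intro t ht
    rw [Measure.restrict_pi_pi, Measure.smul_apply, Measure.pi_pi]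
    simp [ProbabilityTheory.cond, Finset.prod_mul_distrib]
  rw [this]
  gcongr
  exact Measure.restrict_le_self


theorem cheb_aux (n : ℕ) (μ : Measure ℝ) [IsProbabilityMeasure μ] (X : Fin n → ℝ → ℝ)
    (hX : ∀ i, MemLp (X i) 2 μ) (V c : ℝ) (hV : ∑ i, Var[X i; μ] ≤ V) (hc : 0 < c) :
    (Measure.pi fun _ : Fin n => μ).real {ω | c ≤ |∑ i, X i (ω i) - ∑ i, ∫ x, X i x ∂μ|}
      ≤ V / c ^ 2 := by
  have hmem : ∀ i, MemLp (fun ω : Fin n → ℝ => X i (ω i)) 2 (Measure.pi fun _ : Fin n => μ) :=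
    fun i => (hX i).comp_measurePreserving (measurePreserving_eval (fun _ : Fin n => μ) i)
  have h1 : MemLp (∑ i, fun ω : Fin n → ℝ => X i (ω i)) 2 (Measure.pi fun _ : Fin n => μ) :=
    memLp_finsetSum' _ fun i _ => hmem i
  have h2 := meas_ge_le_variance_div_sq h1 hc
  rw [variance_sum_pi hX] at h2
  have h3 : ∫ ω, (∑ i, fun ω : Fin n → ℝ => X i (ω i)) ω ∂(Measure.pi fun _ : Fin n => μ)
      = ∑ i, ∫ x, X i x ∂μ := by
    simp only [Finset.sum_apply]
    rw [integral_finsetSum _ fun i _ => (hmem i).integrable (by norm_num)]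
    refine Finset.sum_congr rfl fun i _ => ?_
    exact integral_comp_eval (μ := fun _ : Fin n => μ) (hX i).aestronglyMeasurable
  rw [h3] at h2
  simp only [Finset.sum_apply] at h2
  have hV0 : 0 ≤ ∑ i, Var[X i; μ] := Finset.sum_nonneg fun i _ => variance_nonneg _ _
  have h4 := ENNReal.toReal_mono ENNReal.ofReal_ne_top h2
  rw [ENNReal.toReal_ofReal (by positivity)] at h4
  exact h4.trans (by gcongr)

noncomputable def ratioR (v : NNReal) (x y : ℝ) : ℝ :=
  gaussianPDFReal x 1 y / gaussianPDFReal 0 v y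

theorem ratioR_meas (v : NNReal) (x : ℝ) : Measurable (ratioR v x) :=
  (measurable_gaussianPDFReal _ _).div (measurable_gaussianPDFReal _ _)

theorem ratioR_nonneg (v : NNReal) (x y : ℝ) : 0 ≤ ratioR v x y :=
  div_nonneg (gaussianPDFReal_nonneg _ _ _) (gaussianPDFReal_nonneg _ _ _)

theorem ratioR_integrable (v : NNReal) (hv : v ≠ 0) (x : ℝ) :
    Integrable (ratioR v x) (gaussianReal 0 v) := by
  rw [gaussianReal_of_var_ne_zero _ hv,
    integrable_withDensity_iff (measurable_gaussianPDF _ _) (ae_of_all _ fun _ => gaussianPDF_lt_top)]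
  refine (integrable_gaussianPDFReal x 1).congr (ae_of_all _ fun y => ?_)
  have := (gaussianPDFReal_pos 0 v y hv).ne'
  simp only [toReal_gaussianPDF, ratioR]
  field_simp

theorem ratioR_integral (v : NNReal) (hv : v ≠ 0) (x : ℝ) :
    ∫ y, ratioR v x y ∂(gaussianReal 0 v) = 1 := by
  rw [integral_gaussianReal_eq_integral_smul hv, ← integral_gaussianPDFReal_eq_one x one_ne_zero]
  refine integral_congr_ae (ae_of_all _ fun y => ?_)
  have := (gaussianPDFReal_pos 0 v y hv).ne'
  simp only [ratioR, smul_eq_mul]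
  field_simp

theorem ratioR_eq (v : NNReal) (hv : v ≠ 0) (x z : ℝ) :
    ratioR v x (x + z) =
      Real.exp (1 / 2 * Real.log v - z ^ 2 / 2 + (x + z) ^ 2 / (2 * v)) := by
  have hv' : (0 : ℝ) < v := by positivity
  simp only [ratioR, gaussianPDFReal]
  have h1 : Real.exp (1 / 2 * Real.log v) = √(v : ℝ) := by
    rw [Real.sqrt_eq_rpow, Real.rpow_def_of_pos hv']; ring_nf
  rw [Real.exp_add, Real.exp_sub, h1, Real.sqrt_mul (by positivity), Real.sqrt_mul (by positivity)]
  simp only [NNReal.coe_one, Real.sqrt_one, mul_one, add_sub_cancel_left, sub_zero, neg_div,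
    Real.exp_neg]
  have : √(2 * Real.pi) ≠ 0 := by positivity
  have : √(v : ℝ) ≠ 0 := by positivity
  field_simp
  rw [Real.sqrt_mul (by positivity), Real.sqrt_mul (by positivity)]

theorem Q_bound (n : ℕ) (v : NNReal) (hv : v ≠ 0) (x : Fin n → ℝ) (γ : ℝ) :
    (Measure.pi fun _ : Fin n => gaussianReal 0 v).real
      {y | Real.exp γ ≤ ∏ j, ratioR v (x j) (y j)} ≤ Real.exp (-γ) := by
  have h := mul_meas_ge_le_integral_of_nonneg
    (μ := Measure.pi fun _ : Fin n => gaussianReal 0 v)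
    (f := fun y => ∏ j, ratioR v (x j) (y j))
    (ae_of_all _ fun y => Finset.prod_nonneg fun j _ => ratioR_nonneg _ _ _)
    (Integrable.fintype_prod fun j => ratioR_integrable v hv (x j)) (Real.exp γ)
  rw [integral_fintype_prod_eq_prod (fun j => ratioR v (x j))] at h
  simp only [ratioR_integral v hv, Finset.prod_const_one] at h
  rw [Real.exp_neg, ← one_div, le_div_iff₀ (Real.exp_pos _)]
  linarith

theorem ratio_prod_lower (n : ℕ) (p : NNReal) (η : ℝ) (hη : 0 < η) (x z : Fin n → ℝ)
    (hx : n * (p - 2 * η) ≤ ∑ j, x j ^ 2) (hz : ∑ j, z j ^ 2 ≤ n * (1 + η))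
    (hxz : - (n * η) ≤ ∑ j, x j * z j) :
    Real.exp (n * (1 / 2 * Real.log (1 + p) - 2 * η)) ≤
      ∏ j, ratioR (p + 1) (x j) (x j + z j) := by
  have hv : p + 1 ≠ 0 := by positivity
  simp_rw [ratioR_eq (p + 1) hv]
  rw [← Real.exp_sum]
  apply Real.exp_le_exp.mpr
  have hp : (0 : ℝ) ≤ p := p.2
  have e : ∑ j, (1 / 2 * Real.log ((p + 1 : NNReal) : ℝ) - z j ^ 2 / 2
      + (x j + z j) ^ 2 / (2 * ((p + 1 : NNReal) : ℝ))) =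
      n * (1 / 2 * Real.log (1 + p)) +
      (- p * ∑ j, z j ^ 2 + ∑ j, x j ^ 2 + 2 * ∑ j, x j * z j) / (2 * (p + 1)) := by
    rw [Finset.mul_sum, Finset.mul_sum, ← Finset.sum_add_distrib, ← Finset.sum_add_distrib,
      Finset.sum_div]
    have : (n : ℝ) * (1 / 2 * Real.log (1 + p)) = ∑ _j : Fin n, (1 / 2 * Real.log (1 + p)) := by
      simp
    rw [this, ← Finset.sum_add_distrib]
    refine Finset.sum_congr rfl fun j _ => ?_
    push_cast
    rw [add_comm (1 : ℝ) p]
    field_simp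
    ring
  rw [e]
  have : - (2 * η * n) ≤ (- p * ∑ j, z j ^ 2 + ∑ j, x j ^ 2 + 2 * ∑ j, x j * z j) / (2 * (p + 1)) := by
    rw [le_div_iff₀ (by positivity)]
    have h1 : p * ∑ j, z j ^ 2 ≤ p * (n * (1 + η)) := by gcongr
    have h2 : 0 ≤ η * n * p := by positivity
    nlinarith
  linarith

theorem exists_trunc (p : NNReal) (η : ℝ) (hη : 0 < η) :
    ∃ B : ℝ, 0 < B ∧ Real.exp (-η) ≤ (gaussianReal 0 p).real (Set.Icc (-B) B) ∧
      |∫ x, x ^ 2 ∂(ProbabilityTheory.cond (gaussianReal 0 p) (Set.Icc (-B) B)) - p| ≤ η := by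
  set G := gaussianReal 0 p with hG
  set s : ℕ → Set ℝ := fun k => Set.Icc (-(k : ℝ)) k with hs
  have hsm : ∀ k, MeasurableSet (s k) := fun k => measurableSet_Icc
  have hmono : Monotone s := fun a b hab => by
    have : (a : ℝ) ≤ b := by exact_mod_cast hab
    exact Set.Icc_subset_Icc (by linarith) this
  have hU : ⋃ k, s k = Set.univ := by
    refine Set.eq_univ_of_forall fun x => ?_
    obtain ⟨k, hk⟩ := exists_nat_ge |x|
    exact Set.mem_iUnion.mpr ⟨k, abs_le.mp hk⟩
  have hint : Integrable (fun x : ℝ => x ^ 2) G := by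
    have := (memLp_id_gaussianReal (μ := 0) (v := p) 2).integrable_sq
    simpa using this
  have hsec : ∫ x, x ^ 2 ∂G = p := by
    have := variance_fun_id_gaussianReal (μ := 0) (v := p)
    rw [variance_of_integral_eq_zero (by fun_prop) (by simp)] at this
    simpa using this
  have t1 : Tendsto (fun k => ∫ x in s k, x ^ 2 ∂G) atTop (nhds p) := by
    have := tendsto_setIntegral_of_monotone (f := fun x : ℝ => x ^ 2) (μ := G) hsm hmono
      hint.integrableOn
    rwa [hU, setIntegral_univ, hsec] at this
  have t2 : Tendsto (fun k => G.real (s k)) atTop (nhds 1) := by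
    have := tendsto_setIntegral_of_monotone (f := fun x : ℝ => (1 : ℝ)) (μ := G) hsm hmono
      (integrable_const _).integrableOn
    rw [hU] at this
    simpa using this
  have t3 : Tendsto (fun k => (G.real (s k))⁻¹ * ∫ x in s k, x ^ 2 ∂G) atTop (nhds p) := by
    simpa using (t2.inv₀ one_ne_zero).mul t1
  have e1 : ∀ᶠ k in atTop, Real.exp (-η) ≤ G.real (s k) :=
    t2.eventually (Ici_mem_nhds (by simpa using hη))
  have e2 := t3.eventually (Metric.closedBall_mem_nhds (p : ℝ) hη)
  obtain ⟨k, h1, h2, h3⟩ := (e1.and (e2.and (eventually_gt_atTop 0))).exists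
  refine ⟨k, by exact_mod_cast h3, h1, ?_⟩
  rw [ProbabilityTheory.cond, integral_smul_measure]
  simp only [Real.dist_eq] at h2
  simpa [ENNReal.toReal_inv, Measure.real, hs] using h2

def GoodCode (P ε A : ℝ) (n M : ℕ) : Prop :=
  ∃ f : Fin M → (Fin n → ℝ), ∃ g : (Fin n → ℝ) → Fin M,
        Measurable g ∧
        (∀ i, ∑ j, (f i j) ^ 2 ≤ n * P) ∧
        (∀ i, ‖f i‖ ≤ A) ∧
        (1 / M : ℝ) * ∑ i, ((stdGaussianPi n) {z | g (f i + z) ≠ i}).toReal ≤ ε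

instance (n : ℕ) : IsProbabilityMeasure (stdGaussianPi n) := by
  unfold stdGaussianPi; infer_instance

/-- From a natural-number indexed code with small maximal error to the required format. -/
theorem goodCode_of (P ε A : ℝ) (n M : ℕ) (hM : 0 < M) (f : ℕ → (Fin n → ℝ))
    (g : (Fin n → ℝ) → ℕ) (hg : Measurable g)
    (h1 : ∀ i < M, ∑ j, (f i j) ^ 2 ≤ n * P) (h2 : ∀ i < M, ‖f i‖ ≤ A)
    (h3 : ∀ i < M, 1 - ε ≤ (stdGaussianPi n).real {z | g (f i + z) = i}) :
    GoodCode P ε A n M := by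
  let q : ℕ → Fin M := fun k => if h : k < M then ⟨k, h⟩ else ⟨0, hM⟩
  refine ⟨fun i => f i, fun y => q (g y), (measurable_of_countable q).comp hg,
    fun i => h1 i i.2, fun i => h2 i i.2, ?_⟩
  have hE : ∀ i : Fin M, ((stdGaussianPi n) {z | q (g (f i + z)) ≠ i}).toReal ≤ ε := by
    intro i
    have hm : MeasurableSet {z | g (f i + z) = i} :=
      (hg.comp (measurable_const_add (f i))) (measurableSet_singleton (i : ℕ))
    have h4 : (stdGaussianPi n).real {z | q (g (f i + z)) ≠ i} ≤
        (stdGaussianPi n).real {z | g (f i + z) = i}ᶜ := by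
      refine measureReal_mono ?_
      intro z hz hz'
      apply hz
      have : g (f i + z) = i := hz'
      simp [q, this]
    rw [probReal_compl_eq_one_sub hm] at h4
    have := h3 i i.2
    change (stdGaussianPi n).real _ ≤ ε
    linarith
  have hM' : (0 : ℝ) < M := by exact_mod_cast hM
  calc (1 / M : ℝ) * ∑ i : Fin M, ((stdGaussianPi n) {z | q (g (f i + z)) ≠ i}).toReal
      ≤ (1 / M : ℝ) * ∑ i : Fin M, ε := by gcongr with i; exact hE i
    _ = ε := by simp; field_simp

theorem goodCode_one (P ε A : ℝ) (hP : 0 < P) (hε : 0 < ε) (hA : 0 < A) (n : ℕ) :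
    GoodCode P ε A n 1 := by
  refine goodCode_of P ε A n 1 one_pos (fun _ => 0) (fun _ => 0) measurable_const ?_ ?_ ?_
  · intro i _; simp; positivity
  · intro i _; simpa using hA.le
  · intro i hi
    obtain rfl : i = 0 := by omega
    simp [hε.le]

/-- The channel error bound, uniform over the shell. -/
theorem channel_bound (n : ℕ) (p : NNReal) (P η : ℝ) (hη : 0 < η) (hn : 0 < n) (x : Fin n → ℝ)
    (hx : n * (p - 2 * η) ≤ ∑ j, x j ^ 2) (hx' : ∑ j, x j ^ 2 ≤ n * P) :
    1 - (Var[fun z : ℝ => z ^ 2; gaussianReal 0 1] + P) / (η ^ 2 * n) ≤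
      (stdGaussianPi n).real {z | Real.exp (n * (1 / 2 * Real.log (1 + p) - 2 * η)) ≤
        ∏ j, ratioR (p + 1) (x j) (x j + z j)} := by
  have hn' : (0 : ℝ) < n := by exact_mod_cast hn
  set V := Var[fun z : ℝ => z ^ 2; gaussianReal 0 1] with hVdef
  set γ := n * (1 / 2 * Real.log (1 + p) - 2 * η) with hγ
  set T := {z : Fin n → ℝ | Real.exp γ ≤ ∏ j, ratioR (p + 1) (x j) (x j + z j)} with hT
  have hTm : MeasurableSet T := by
    refine measurableSet_le measurable_const (Finset.measurable_prod _ fun j _ => ?_)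
    exact (ratioR_meas _ _).comp (by fun_prop)
  have hsq : MemLp (fun z : ℝ => z ^ 2) 2 (gaussianReal 0 1) := by
    have h := memLp_id_gaussianReal (μ := 0) (v := 1) 4
    have h' := h.mul (p := 4) (q := 4) (r := 2) h (hpqr := ⟨by
      rw [← ENNReal.toReal_eq_toReal_iff' (by simp) (by simp)]
      rw [ENNReal.toReal_add (by simp) (by simp)]
      simp
      norm_num⟩)
    simpa [pow_two, Pi.mul_def] using h'
  have hsec : ∫ z, z ^ 2 ∂(gaussianReal 0 1) = 1 := by
    have := variance_fun_id_gaussianReal (μ := 0) (v := 1)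
    rw [variance_of_integral_eq_zero (by fun_prop) (by simp)] at this
    simpa using this
  have hvar : ∀ j, Var[fun z : ℝ => x j * z; gaussianReal 0 1] = x j ^ 2 := fun j => by
    rw [variance_const_mul (x j) (fun z => z), variance_fun_id_gaussianReal]; simp
  have hzero : ∀ j, ∫ z : ℝ, x j * z ∂(gaussianReal 0 1) = 0 := fun j => by
    rw [integral_const_mul, integral_id_gaussianReal]; simp
  have c1 := cheb_aux n (gaussianReal 0 1) (fun _ z => z ^ 2) (fun _ => hsq) (n * V) (n * η)
    (by simp [V]) (by positivity)
  have c2 := cheb_aux n (gaussianReal 0 1) (fun j z => x j * z)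
    (fun j => (memLp_id_gaussianReal' (μ := 0) (v := 1) 2 (by simp)).const_mul (x j)) (n * P) (n * η)
    (by rw [Finset.sum_congr rfl fun j _ => hvar j]; exact hx') (by positivity)
  simp only [hsec, Finset.sum_const, Finset.card_univ, Fintype.card_fin, nsmul_eq_mul, mul_one,
    hzero, mul_zero, sub_zero] at c1 c2
  have hsub : Tᶜ ⊆ {ω : Fin n → ℝ | n * η ≤ |∑ i, ω i ^ 2 - n|} ∪
      {ω : Fin n → ℝ | n * η ≤ |∑ i, x i * ω i|} := by
    intro z hz
    by_contra hcon
    simp only [Set.mem_union, Set.mem_ofPred_eq, not_or, not_le] at hcon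
    apply hz
    have a1 := (abs_lt.mp hcon.1).2
    have a2 := (abs_lt.mp hcon.2).1
    exact ratio_prod_lower n p η hη x z hx (by linarith) a2.le
  have h5 : (stdGaussianPi n).real Tᶜ ≤ n * V / (n * η) ^ 2 + n * P / (n * η) ^ 2 :=
    ((measureReal_mono hsub).trans (measureReal_union_le _ _)).trans (add_le_add c1 c2)
  rw [probReal_compl_eq_one_sub hTm] at h5
  have h6 : n * V / (n * η) ^ 2 + n * P / (n * η) ^ 2 = (V + P) / (η ^ 2 * n) := by
    field_simp
  linarith

theorem main_codes (p : NNReal) (P η ε : ℝ) (hη : 0 < η) (hε : 0 < ε) (hpP : p + 2 * η ≤ P)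
    (A : ℕ → ℝ) (hA : Tendsto A atTop atTop) :
    ∀ᶠ n : ℕ in atTop, ∀ M : ℕ, 0 < M →
      M * Real.exp (-(n * (1 / 2 * Real.log (1 + p) - 2 * η))) < ε / 4 * Real.exp (-(n * η)) →
      GoodCode P ε (A n) n M := by
  obtain ⟨B, hB, hGB, hmB⟩ := exists_trunc p η hη
  set G := gaussianReal 0 p with hG
  set s := Set.Icc (-B) B with hs
  have hGs : G s ≠ 0 := by
    intro h
    rw [Measure.real, h] at hGB
    simp at hGB
    linarith [Real.exp_pos (-η)]
  set μ := ProbabilityTheory.cond G s with hμ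
  have : IsProbabilityMeasure μ := cond_isProbabilityMeasure hGs
  have hμs : ∀ᵐ x ∂μ, x ∈ s := ae_cond_mem measurableSet_Icc
  set V := Var[fun z : ℝ => z ^ 2; gaussianReal 0 1] with hV
  set V' := Var[fun x : ℝ => x ^ 2; μ] with hV'
  have hmemμ : MemLp (fun x : ℝ => x ^ 2) 2 μ := by
    refine MemLp.of_bound (by fun_prop) (B ^ 2) (hμs.mono fun x hx => ?_)
    rw [Real.norm_eq_abs, abs_pow]
    have : |x| ≤ B := abs_le.mpr hx
    gcongr
  have l1 : Tendsto (fun n : ℕ => (V + P) / (η ^ 2 * n)) atTop (nhds 0) :=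
    Tendsto.div_atTop tendsto_const_nhds
      (tendsto_natCast_atTop_atTop.const_mul_atTop (by positivity))
  have l2 : Tendsto (fun n : ℕ => V' / (η ^ 2 * n)) atTop (nhds 0) :=
    Tendsto.div_atTop tendsto_const_nhds
      (tendsto_natCast_atTop_atTop.const_mul_atTop (by positivity))
  filter_upwards [hA.eventually_ge_atTop B, eventually_gt_atTop 0,
    l1.eventually (Iic_mem_nhds (show (0 : ℝ) < ε / 2 by positivity)),
    l2.eventually (Iic_mem_nhds (show (0 : ℝ) < 1 / 2 by positivity))] with n hAn hn hn1 hn2 M hM0 hM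
  have hn' : (0 : ℝ) < n := by exact_mod_cast hn
  change (V + P) / (η ^ 2 * n) ≤ ε / 2 at hn1
  change V' / (η ^ 2 * n) ≤ 1 / 2 at hn2
  set γ := n * (1 / 2 * Real.log (1 + p) - 2 * η) with hγ
  let T : Set (Fin n → ℝ) := {x | |∑ j, x j ^ 2 - n * p| < n * (2 * η)}
  let S : Set (Fin n → ℝ) := (Set.univ.pi fun _ => s) ∩ T
  have memT : ∀ x, x ∈ T ↔ |∑ j, x j ^ 2 - n * p| < n * (2 * η) := fun x => Iff.rfl
  have hTm : MeasurableSet T := measurableSet_lt (by fun_prop) measurable_const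
  have hSm : MeasurableSet S :=
    (MeasurableSet.univ_pi fun _ => measurableSet_Icc).inter hTm
  let N := stdGaussianPi n
  let W : (Fin n → ℝ) → Measure (Fin n → ℝ) := fun x => N.map (fun z => x + z)
  have hW : ∀ x, IsProbabilityMeasure (W x) := fun x =>
    Measure.isProbabilityMeasure_map (by fun_prop)
  have hWr : ∀ x U, MeasurableSet U → (W x).real U = N.real {z | x + z ∈ U} := fun x U hU => by
    simp only [W, Measure.real]
    rw [Measure.map_apply (by fun_prop) hU]
    rfl
  let Q : Measure (Fin n → ℝ) := Measure.pi fun _ : Fin n => gaussianReal 0 (p + 1)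
  let D : (Fin n → ℝ) → Set (Fin n → ℝ) :=
    fun x => {y | Real.exp γ ≤ ∏ j, ratioR (p + 1) (x j) (y j)}
  have hDm : ∀ x, MeasurableSet (D x) := fun x => by
    refine measurableSet_le measurable_const (Finset.measurable_prod _ fun j _ => ?_)
    exact (ratioR_meas _ _).comp (by fun_prop)
  have hSpow : ∀ x ∈ S, ∑ j, x j ^ 2 ≤ n * P := by
    intro x hx
    have := (abs_lt.mp ((memT x).mp hx.2)).2
    have h2 : n * (p + 2 * η) ≤ n * P := by gcongr
    linarith
  have hμS : 1 / 2 ≤ (Measure.pi fun _ : Fin n => μ).real S := by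
    have c := cheb_aux n μ (fun _ x => x ^ 2) (fun _ => hmemμ) (n * V') (n * η)
      (by simp [V']) (by positivity)
    simp only [Finset.sum_const, Finset.card_univ, Fintype.card_fin, nsmul_eq_mul] at c
    have e : n * V' / (n * η) ^ 2 = V' / (η ^ 2 * n) := by field_simp
    rw [e] at c
    have hbox : (Measure.pi fun _ : Fin n => μ) (Set.univ.pi fun _ => s)ᶜ = 0 := by
      rw [prob_compl_eq_zero_iff (MeasurableSet.univ_pi fun _ => measurableSet_Icc), Measure.pi_pi]
      have : μ s = 1 := (prob_compl_eq_zero_iff measurableSet_Icc).mp hμs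
      exact Finset.prod_eq_one fun _ _ => this
    have hsub : Sᶜ ⊆ (Set.univ.pi fun _ => s)ᶜ ∪
        {ω : Fin n → ℝ | n * η ≤ |∑ i, ω i ^ 2 - n * ∫ x, x ^ 2 ∂μ|} := by
      intro x hx
      by_contra hcon
      simp only [Set.mem_union, Set.mem_ofPred_eq, not_or, not_le, Set.mem_compl_iff, not_not] at hcon
      apply hx
      refine ⟨hcon.1, ?_⟩
      have h2 : |n * ∫ x, x ^ 2 ∂μ - n * p| ≤ n * η := by
        rw [← mul_sub, abs_mul, abs_of_pos hn']
        gcongr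
      have h3 := abs_sub_le (∑ i, x i ^ 2) (n * ∫ x, x ^ 2 ∂μ) (n * p)
      rw [memT]
      linarith [hcon.2]
    have h5 := (measureReal_mono (μ := Measure.pi fun _ : Fin n => μ) hsub).trans
      (measureReal_union_le _ _)
    rw [probReal_compl_eq_one_sub hSm] at h5
    have h6 : (Measure.pi fun _ : Fin n => μ).real (Set.univ.pi fun _ => s)ᶜ = 0 := by
      rw [Measure.real, hbox]; rfl
    linarith
  have h1 : ∀ x ∈ S, 1 - ε / 2 ≤ (W x).real (D x) := by
    intro x hx
    rw [hWr x _ (hDm x)]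
    have hlow : n * (p - 2 * η) ≤ ∑ j, x j ^ 2 := by
      have := (abs_lt.mp ((memT x).mp hx.2)).1
      linarith
    have := channel_bound n p P η hη hn x hlow (hSpow x hx)
    have h2 : 1 - ε / 2 ≤ 1 - (V + P) / (η ^ 2 * n) := by linarith
    exact h2.trans this
  have h2 : ∀ x ∈ S, Q.real (D x) ≤ Real.exp (-γ) := fun x _ =>
    Q_bound n (p + 1) (by positivity) x γ
  have h3 : ∀ U, MeasurableSet U → (∀ x ∈ S, ε / 2 ≤ (W x).real U) →
      ε / 4 * Real.exp (-(n * η)) ≤ Q.real U := by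
    intro U hU hSU
    have hQ : Q U = ∫⁻ x, W x U ∂(Measure.pi fun _ : Fin n => G) := by
      have : Q = (Measure.pi fun _ : Fin n => G).conv N := by
        change _ = (Measure.pi fun _ : Fin n => G).conv (Measure.pi fun _ : Fin n => gaussianReal 0 1)
        rw [pi_conv_aux, hG, gaussianReal_conv_gaussianReal]
        simp [Q]
      rw [this, ← lintegral_indicator_one hU, Measure.lintegral_conv (by measurability)]
      refine lintegral_congr fun x => ?_
      rw [← lintegral_indicator_one hU]
      simp only [W]
      rw [lintegral_map (measurable_one.indicator hU) (by fun_prop)]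
    have hle : ∫⁻ x, W x U ∂(Measure.pi fun _ : Fin n => μ) ≤ ((G s)⁻¹) ^ n * Q U := by
      rw [hQ, ← smul_eq_mul, ← lintegral_smul_measure]
      exact lintegral_mono' (pi_cond_le n G s hGs) le_rfl
    have hge : ENNReal.ofReal (ε / 2) * (Measure.pi fun _ : Fin n => μ) S ≤
        ∫⁻ x, W x U ∂(Measure.pi fun _ : Fin n => μ) := by
      rw [← setLIntegral_const]
      refine (setLIntegral_mono' hSm fun x hx => ?_).trans (setLIntegral_le_lintegral S _)
      exact ENNReal.ofReal_le_of_le_toReal (hSU x hx)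
    have hfin : ((G s)⁻¹) ^ n * Q U ≠ ⊤ :=
      ENNReal.mul_ne_top (ENNReal.pow_ne_top (ENNReal.inv_ne_top.mpr hGs)) (measure_ne_top _ _)
    have hr := ENNReal.toReal_mono hfin (hge.trans hle)
    rw [ENNReal.toReal_mul, ENNReal.toReal_mul, ENNReal.toReal_ofReal (by positivity),
      ENNReal.toReal_pow, ENNReal.toReal_inv] at hr
    change ε / 2 * (Measure.pi fun _ : Fin n => μ).real S ≤ (G.real s)⁻¹ ^ n * Q.real U at hr
    have hGpos : 0 < G.real s := (Real.exp_pos _).trans_le hGB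
    have hpow : Real.exp (-(n * η)) ≤ G.real s ^ n := by
      have : -(n * η) = n * (-η) := by ring
      rw [this, Real.exp_nat_mul]
      gcongr
    rw [inv_pow, inv_mul_eq_div, le_div_iff₀ (by positivity)] at hr
    calc ε / 4 * Real.exp (-(n * η)) = ε / 2 * (1 / 2) * Real.exp (-(n * η)) := by ring
      _ ≤ ε / 2 * (Measure.pi fun _ : Fin n => μ).real S * G.real s ^ n := by gcongr
      _ ≤ Q.real U := hr
  obtain ⟨f, g, hg, -, hfg⟩ := feinstein_aux W Q S D hDm (ε / 2) (Real.exp (-γ)) _ h1 h2 h3 0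
    (Real.exp_pos _).le M hM
  refine goodCode_of P ε (A n) n M hM0 f g hg (fun i hi => hSpow _ (hfg i hi).1) ?_ ?_
  · intro i hi
    refine (pi_norm_le_iff_of_nonneg (hB.le.trans hAn)).mpr fun j => ?_
    have : f i j ∈ s := (hfg i hi).1.1 j trivial
    exact (abs_le.mpr this).trans hAn
  · intro i hi
    have := (hfg i hi).2
    have hm : MeasurableSet {y | g y = i} := hg (measurableSet_singleton i)
    rw [hWr _ _ hm] at this
    calc 1 - ε = 1 - 2 * (ε / 2) := by ring
      _ ≤ _ := this

theorem rate_codes (P ε : ℝ) (hP : 0 < P) (hε : 0 < ε) (A : ℕ → ℝ) (hA : Tendsto A atTop atTop)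
    (R : ℝ) (hR0 : 0 ≤ R) (hR : R < 1 / 2 * Real.log (1 + P)) :
    ∀ᶠ n : ℕ in atTop, GoodCode P ε (A n) n ⌈Real.exp (n * R)⌉₊ := by
  have hcont : Tendsto (fun η : ℝ => 1 / 2 * Real.log (1 + (P - 2 * η)) - 3 * η) (nhds 0)
      (nhds (1 / 2 * Real.log (1 + P))) := by
    have : ContinuousAt (fun η : ℝ => 1 / 2 * Real.log (1 + (P - 2 * η)) - 3 * η) 0 := by
      refine ContinuousAt.sub (ContinuousAt.mul continuousAt_const
        (ContinuousAt.log (by fun_prop) ?_)) (by fun_prop)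
      simp; positivity
    simpa [ContinuousAt] using this
  have e1 := (hcont.eventually (Ioi_mem_nhds hR)).filter_mono (nhdsWithin_le_nhds (s := Set.Ioi 0))
  have e2 : ∀ᶠ η : ℝ in nhdsWithin 0 (Set.Ioi 0), η < P / 2 :=
    Eventually.filter_mono nhdsWithin_le_nhds
      (Iio_mem_nhds (show (0 : ℝ) < P / 2 by positivity))
  obtain ⟨η, ⟨h1, h2⟩, h3⟩ := ((e1.and e2).and self_mem_nhdsWithin).exists
  have hη : 0 < η := h3
  have h1' : R < 1 / 2 * Real.log (1 + (P - 2 * η)) - 3 * η := h1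
  let p : NNReal := ⟨P - 2 * η, by linarith⟩
  have hp : (p : ℝ) = P - 2 * η := rfl
  set C := 1 / 2 * Real.log (1 + (P - 2 * η)) - 3 * η with hC
  have lim : Tendsto (fun n : ℕ => Real.exp (n * (R - C))) atTop (nhds 0) := by
    refine Real.tendsto_exp_atBot.comp ?_
    exact tendsto_natCast_atTop_atTop.atTop_mul_const_of_neg (by linarith)
  filter_upwards [main_codes p P η ε hη hε (by rw [hp]; linarith) A hA,
    lim.eventually (Iio_mem_nhds (show (0 : ℝ) < ε / 8 by positivity))] with n hn hl
  have hl' : Real.exp (n * (R - C)) < ε / 8 := hl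
  apply hn
  · exact Nat.ceil_pos.mpr (Real.exp_pos _)
  · have hexp1 : 1 ≤ Real.exp (n * R) := Real.one_le_exp (by positivity)
    have hc : (⌈Real.exp (n * R)⌉₊ : ℝ) ≤ 2 * Real.exp (n * R) := by
      have := Nat.ceil_lt_add_one (Real.exp_pos (n * R)).le
      linarith
    rw [hp]
    calc (⌈Real.exp (n * R)⌉₊ : ℝ) * Real.exp (-(n * (1 / 2 * Real.log (1 + (P - 2 * η)) - 2 * η)))
        ≤ 2 * Real.exp (n * R) * Real.exp (-(n * (1 / 2 * Real.log (1 + (P - 2 * η)) - 2 * η))) := by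
          gcongr
      _ = 2 * Real.exp (n * (R - C)) * Real.exp (-(n * η)) := by
          rw [mul_assoc, mul_assoc, ← Real.exp_add, ← Real.exp_add]
          congr 2
          rw [hC]; ring
      _ < 2 * (ε / 8) * Real.exp (-(n * η)) := by gcongr
      _ = ε / 4 * Real.exp (-(n * η)) := by ring

theorem main_aux
    (P : ℝ) (hP : 0 < P) (ε : ℝ) (hε : 0 < ε)
    (A : ℕ → ℝ) (hApos : ∀ n, 0 < A n) (hA : Tendsto A atTop atTop) :
    ∃ M : ℕ → ℕ, (∀ n : ℕ, GoodCode P ε (A n) n (M n)) ∧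
      Tendsto (fun n : ℕ => (1 / n : ℝ) * Real.log (M n)) atTop
        (nhds ((1 / 2) * Real.log (1 + P))) := by
  classical
  set C := 1 / 2 * Real.log (1 + P) with hC
  have hCpos : 0 < C := by
    have := Real.log_pos (show 1 < 1 + P by linarith)
    positivity
  let R : ℕ → ℝ := fun k => C * (1 - 1 / ((k : ℝ) + 1))
  have hR0 : R 0 = 0 := by simp [R]
  have hRnn : ∀ k, 0 ≤ R k := fun k => by
    have : 1 / ((k : ℝ) + 1) ≤ 1 := by
      rw [div_le_one (by positivity)]
      have : (0 : ℝ) ≤ k := by positivity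
      linarith
    exact mul_nonneg hCpos.le (by linarith)
  have hRlt : ∀ k, R k < C := fun k => by
    have : 0 < 1 / ((k : ℝ) + 1) := by positivity
    simp only [R]
    nlinarith
  have hRlim : Tendsto R atTop (nhds C) := by
    simpa [R] using (tendsto_const_nhds (x := (1 : ℝ))).sub
      (tendsto_one_div_add_atTop_nhds_zero_nat (𝕜 := ℝ)) |>.const_mul C
  let good : ℕ → ℕ → Prop := fun n k => GoodCode P ε (A n) n ⌈Real.exp (n * R k)⌉₊
  have good0 : ∀ n, good n 0 := fun n => by
    simp only [good, hR0, mul_zero, Real.exp_zero, Nat.ceil_one]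
    exact goodCode_one P ε (A n) hP hε (hApos n) n
  let k : ℕ → ℕ := fun n => Nat.findGreatest (good n) n
  have hk : ∀ n, good n (k n) := fun n => Nat.findGreatest_spec (Nat.zero_le n) (good0 n)
  have hkt : Tendsto k atTop atTop := by
    refine tendsto_atTop.mpr fun K => ?_
    filter_upwards [rate_codes P ε hP hε A hA (R K) (hRnn K) (hRlt K), eventually_ge_atTop K]
      with n h1 h2
    exact Nat.le_findGreatest h2 h1
  refine ⟨fun n => ⌈Real.exp (n * R (k n))⌉₊, hk, ?_⟩
  have l1 : Tendsto (fun n => R (k n)) atTop (nhds C) := hRlim.comp hkt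
  have l2 : Tendsto (fun n : ℕ => R (k n) + Real.log 2 / n) atTop (nhds C) := by
    simpa using l1.add (tendsto_const_div_atTop_nhds_zero_nat (Real.log 2))
  refine tendsto_of_tendsto_of_tendsto_of_le_of_le' l1 l2 ?_ ?_
  · filter_upwards [eventually_gt_atTop 0] with n hn
    have hn' : (0 : ℝ) < n := by exact_mod_cast hn
    rw [one_div, inv_mul_eq_div, le_div_iff₀ hn', Real.le_log_iff_exp_le (by
      exact_mod_cast Nat.ceil_pos.mpr (Real.exp_pos _)), mul_comm]
    exact Nat.le_ceil _
  · filter_upwards [eventually_gt_atTop 0] with n hn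
    have hn' : (0 : ℝ) < n := by exact_mod_cast hn
    have hexp1 : 1 ≤ Real.exp (n * R (k n)) :=
      Real.one_le_exp (mul_nonneg hn'.le (hRnn _))
    have hc : (⌈Real.exp (n * R (k n))⌉₊ : ℝ) ≤ 2 * Real.exp (n * R (k n)) := by
      have := Nat.ceil_lt_add_one (Real.exp_pos (n * R (k n))).le
      linarith
    have hl := Real.log_le_log (by
      exact_mod_cast Nat.ceil_pos.mpr (Real.exp_pos (n * R (k n)))) hc
    rw [Real.log_mul (by norm_num) (Real.exp_pos _).ne', Real.log_exp] at hl
    rw [one_div, inv_mul_eq_div, div_le_iff₀ hn', add_mul, div_mul_cancel₀ _ hn'.ne']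
    linarith

/-- For `P > 0`, `ε ∈ (0,1)` and any positive sequence `A n → ∞`, there is a
sequence of `(n, Mₙ, ε, P)` codes for the AWGN channel whose codewords all satisfy the amplitude
constraint `‖x‖_∞ ≤ A n` (the sup norm on `Fin n → ℝ` is the norm of the Pi type), and whose
rate `(1/n) ln Mₙ` converges to the capacity `(1/2) ln (1+P)`. -/
theorem papr_capacity_achievable_with_slowly_growing_amplitude
    (P : ℝ) (hP : 0 < P) (ε : ℝ) (hε : ε ∈ Set.Ioo (0 : ℝ) 1)
    (A : ℕ → ℝ) (hApos : ∀ n, 0 < A n) (hA : Tendsto A atTop atTop) :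
    ∃ M : ℕ → ℕ,
      (∀ n : ℕ, ∃ f : Fin (M n) → (Fin n → ℝ), ∃ g : (Fin n → ℝ) → Fin (M n),
        Measurable g ∧
        (∀ i, ∑ j, (f i j) ^ 2 ≤ n * P) ∧
        (∀ i, ‖f i‖ ≤ A n) ∧
        (1 / (M n) : ℝ) * ∑ i, ((stdGaussianPi n) {z | g (f i + z) ≠ i}).toReal ≤ ε) ∧
      Tendsto (fun n : ℕ => (1 / n : ℝ) * Real.log (M n)) atTop
        (nhds ((1 / 2) * Real.log (1 + P))) := by
  exact main_aux P hP ε hε.1 A hApos hA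
end

section
/- Fix P > 0, ε ∈ (0, 1/2), α ∈ [1/2, 1), γ > 0, and let δ_{α,P} = (1−α)(√(1+P) − 1)². Then for any δ < δ_{α,P} there exists N₀ = N₀(α, P, δ, γ, ε) such that for all n ≥ N₀ the following holds: for every (n, M, ε, P) code for the AWGN channel whose size satisfies ln M ≥ n·(1/2)ln(1+P) − γ·n^α, and for every n×n real orthogonal matrix U, at least M/2 of the codewords x = f(i) satisfy ‖U x‖_∞ ≥ √(2 δ ln n). -/
open MeasureTheory ProbabilityTheory

open scoped ENNReal NNReal

namespace PAPR

lemma lintegral_prod_pi {n : ℕ} (μ : Fin n → Measure ℝ) [∀ i, IsProbabilityMeasure (μ i)]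
    (f : Fin n → ℝ → ℝ≥0∞) (hf : ∀ i, Measurable (f i)) :
    ∫⁻ x, ∏ i, f i (x i) ∂(Measure.pi μ) = ∏ i, ∫⁻ x, f i x ∂(μ i) := by
  have h := lintegral_prod_eq_prod_lintegral_of_indepFun (μ := Measure.pi μ) Finset.univ
    (fun i (x : Fin n → ℝ) => f i (x i))
    (iIndepFun_pi (fun i => (hf i).aemeasurable)) (fun i => (hf i).comp (measurable_pi_apply i))
  rw [h]
  refine Finset.prod_congr rfl fun i _ => ?_
  exact (measurePreserving_eval μ i).lintegral_comp (hf i)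

lemma pi_withDensity' {n : ℕ} (μ : Measure ℝ) [IsProbabilityMeasure μ]
    (f : Fin n → ℝ → ℝ≥0∞) (hf : ∀ i, Measurable (f i))
    [∀ i, SigmaFinite (μ.withDensity (f i))] :
    Measure.pi (fun i => μ.withDensity (f i))
      = (Measure.pi (fun _ : Fin n => μ)).withDensity (fun x => ∏ i, f i (x i)) := by
  refine Measure.pi_eq fun s hs => ?_
  rw [withDensity_apply _ (MeasurableSet.univ_pi hs), ← lintegral_indicator (MeasurableSet.univ_pi hs)]
  have : ∀ x : Fin n → ℝ, (Set.univ.pi s).indicator (fun x => ∏ i, f i (x i)) x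
      = ∏ i, (s i).indicator (f i) (x i) := by
    intro x
    by_cases hx : x ∈ Set.univ.pi s
    · rw [Set.indicator_of_mem hx]
      refine Finset.prod_congr rfl fun i _ => ?_
      rw [Set.indicator_of_mem (hx i (Set.mem_univ i))]
    · rw [Set.indicator_of_notMem hx]
      simp only [Set.mem_pi, Set.mem_univ, true_imp_iff, not_forall] at hx
      obtain ⟨i, hi⟩ := hx
      symm
      exact Finset.prod_eq_zero (Finset.mem_univ i) (Set.indicator_of_notMem hi _)
  simp_rw [this]
  rw [lintegral_prod_pi (fun _ => μ) _ (fun i => (hf i).indicator (hs i))]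
  refine Finset.prod_congr rfl fun i _ => ?_
  rw [withDensity_apply _ (hs i), lintegral_indicator (hs i)]

lemma measurable_mulVec {n : ℕ} (U : Matrix (Fin n) (Fin n) ℝ) :
    Measurable (fun z : Fin n → ℝ => U.mulVec z) :=
  (LinearMap.continuous_of_finiteDimensional (Matrix.mulVecLin U)).measurable

lemma map_orthogonal {n : ℕ} (U : Matrix (Fin n) (Fin n) ℝ)
    (hU : U ∈ Matrix.orthogonalGroup (Fin n) ℝ) :
    (stdGaussianPi n).map (fun z => U.mulVec z) = stdGaussianPi n := by
  have h1 : (stdGaussianPi n).map (WithLp.toLp 2) = stdGaussian (EuclideanSpace ℝ (Fin n)) :=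
    map_pi_eq_stdGaussian
  have h2 : stdGaussianPi n
      = (stdGaussian (EuclideanSpace ℝ (Fin n))).map (WithLp.ofLp) := by
    rw [← h1, Measure.map_map (by fun_prop) (by fun_prop)]
    exact (Measure.map_id).symm
  have hUT : U.transpose * U = 1 := (Matrix.mem_orthogonalGroup_iff' (Fin n) ℝ).1 hU
  have hUT' : U * U.transpose = 1 := (Matrix.mem_orthogonalGroup_iff (Fin n) ℝ).1 hU
  let e : EuclideanSpace ℝ (Fin n) →ₗᵢ[ℝ] EuclideanSpace ℝ (Fin n) :=
    { toLinearMap := Matrix.toEuclideanLin U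
      norm_map' := by
        intro x
        rw [← sq_eq_sq₀ (norm_nonneg _) (norm_nonneg _), EuclideanSpace.real_norm_sq_eq,
          EuclideanSpace.real_norm_sq_eq]
        have : ∀ v : Fin n → ℝ, ∑ i, v i ^ 2 = v ⬝ᵥ v := by
          intro v; simp [dotProduct, sq]
        rw [this, this]
        change (U.mulVec x.ofLp) ⬝ᵥ (U.mulVec x.ofLp) = _
        rw [Matrix.dotProduct_mulVec, Matrix.vecMul_mulVec, hUT, Matrix.vecMul_one] }
  let e' : EuclideanSpace ℝ (Fin n) ≃ₗᵢ[ℝ] EuclideanSpace ℝ (Fin n) :=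
    e.toLinearIsometryEquiv rfl
  have h3 := stdGaussian_map e'
  conv_rhs => rw [h2, ← h3]
  rw [Measure.map_map (by fun_prop) (by fun_prop), ← h1,
    Measure.map_map (by fun_prop) (by fun_prop)]
  rfl

lemma norm_orthogonal {n : ℕ} (U : Matrix (Fin n) (Fin n) ℝ)
    (hU : U ∈ Matrix.orthogonalGroup (Fin n) ℝ) (x : Fin n → ℝ) :
    ∑ i, (U.mulVec x i) ^ 2 = ∑ i, (x i) ^ 2 := by
  have hUT : U.transpose * U = 1 := (Matrix.mem_orthogonalGroup_iff' (Fin n) ℝ).1 hU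
  have : ∀ v : Fin n → ℝ, ∑ i, v i ^ 2 = v ⬝ᵥ v := by
    intro v; simp [dotProduct, sq]
  rw [this, this, Matrix.dotProduct_mulVec, Matrix.vecMul_mulVec, hUT, Matrix.vecMul_one]

/-- single-letter log likelihood ratio -/
noncomputable def ll (V x y : ℝ) : ℝ :=
  1 / 2 * Real.log V + y ^ 2 / (2 * V) - (y - x) ^ 2 / 2

/-- log of tilt -/
noncomputable def tilt (p t y : ℝ) : ℝ := p / 2 - (if t < |y| then 1 else 0)

lemma measurable_ll (V x : ℝ) : Measurable (ll V x) := by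
  unfold ll; fun_prop

lemma measurable_tilt (p t : ℝ) : Measurable (tilt p t) := by
  unfold tilt
  refine Measurable.sub measurable_const (Measurable.ite ?_ measurable_const measurable_const)
  exact measurableSet_lt measurable_const (by fun_prop)

lemma gaussian_density (V : ℝ≥0) (hV : 0 < V) (x : ℝ) :
    gaussianReal x 1 = (gaussianReal 0 V).withDensity
      (fun y => ENNReal.ofReal (Real.exp (ll V x y))) := by
  have hm : Measurable (fun y => ENNReal.ofReal (Real.exp (ll V x y))) :=
    ENNReal.measurable_ofReal.comp (Real.measurable_exp.comp (measurable_ll _ _))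
  rw [gaussianReal_of_var_ne_zero _ hV.ne', gaussianReal_of_var_ne_zero _ one_ne_zero,
    ← withDensity_mul _ (measurable_gaussianPDF _ _) hm]
  congr 1
  ext y
  simp only [Pi.mul_apply, gaussianPDF]
  rw [← ENNReal.ofReal_mul (gaussianPDFReal_nonneg _ _ _)]
  congr 1
  have hV' : (0:ℝ) < V := hV
  have hs : Real.sqrt (2 * Real.pi * V) = Real.sqrt (2 * Real.pi) * Real.exp (1 / 2 * Real.log V) := by
    rw [Real.sqrt_mul (by positivity), one_div, mul_comm (2⁻¹), Real.exp_mul, Real.exp_log hV', Real.sqrt_eq_rpow (V : ℝ)]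
    norm_num
  rw [gaussianPDFReal, gaussianPDFReal, hs, mul_inv, ← Real.exp_neg,
    mul_assoc (Real.sqrt (2 * Real.pi))⁻¹, mul_assoc (Real.sqrt (2 * Real.pi))⁻¹,
    ← Real.exp_add, ← Real.exp_add, ll]
  simp only [NNReal.coe_one, mul_one]
  congr 2
  field_simp
  ring

lemma tilt_mass (V : ℝ≥0) (hV : 0 < V) (t p : ℝ) (ht : 0 ≤ t)
    (hp : p ≤ gaussianPDFReal 0 V (t + 1)) :
    ∫⁻ y, ENNReal.ofReal (Real.exp (tilt p t y)) ∂(gaussianReal 0 V) ≤ 1 := by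
  set ν := gaussianReal 0 V
  set B : Set ℝ := {y | t < |y|}
  have hB : MeasurableSet B := measurableSet_lt measurable_const (by fun_prop)
  have hpB : p ≤ ν.real B := by
    have h1 : ENNReal.ofReal (gaussianPDFReal 0 V (t+1)) ≤ ν B := by
      calc ENNReal.ofReal (gaussianPDFReal 0 V (t+1))
          = ∫⁻ y in Set.Ioc t (t+1), ENNReal.ofReal (gaussianPDFReal 0 V (t+1)) := by
            rw [setLIntegral_const]; simp
        _ ≤ ∫⁻ y in Set.Ioc t (t+1), gaussianPDF 0 V y := by
            refine setLIntegral_mono (measurable_gaussianPDF _ _) fun y hy => ?_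
            refine ENNReal.ofReal_le_ofReal ?_
            unfold gaussianPDFReal
            have h0 : y ^ 2 ≤ (t+1)^2 := by
              have := hy.1; have := hy.2
              nlinarith
            simp only [sub_zero]
            gcongr
        _ = ν (Set.Ioc t (t+1)) := (gaussianReal_apply _ hV.ne' _).symm
        _ ≤ ν B := measure_mono fun y hy => lt_of_lt_of_le hy.1 (le_abs_self y)
    refine hp.trans ?_
    exact (ENNReal.ofReal_le_iff_le_toReal (measure_ne_top _ _)).1 h1
  have e1 : ∀ y, ENNReal.ofReal (Real.exp (tilt p t y))
      = B.indicator (fun _ => ENNReal.ofReal (Real.exp (p/2 - 1))) y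
        + Bᶜ.indicator (fun _ => ENNReal.ofReal (Real.exp (p/2))) y := by
    intro y
    by_cases hy : y ∈ B
    · have : t < |y| := hy
      simp [hy, tilt, this]
    · have : ¬ t < |y| := hy
      simp [hy, tilt, this]
  simp_rw [e1]
  rw [lintegral_add_left (measurable_const.indicator hB), lintegral_indicator_const hB,
    lintegral_indicator_const hB.compl]
  have hc : ν.real Bᶜ = 1 - ν.real B := by
    rw [measureReal_compl hB]; simp
  rw [← ofReal_measureReal (μ := ν) (s := B), ← ofReal_measureReal (μ := ν) (s := Bᶜ), hc,
    ← ENNReal.ofReal_mul (by positivity), ← ENNReal.ofReal_mul (by positivity),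
    ← ENNReal.ofReal_add (by positivity) (mul_nonneg (by positivity)
      (by linarith [measureReal_le_one (μ := ν) (s := B)]))]
  rw [← ENNReal.ofReal_one]
  refine ENNReal.ofReal_le_ofReal ?_
  have hm0 : 0 ≤ ν.real B := measureReal_nonneg
  have he : Real.exp (-1) ≤ 1/2 := by
    have := Real.exp_one_gt_d9
    rw [Real.exp_neg, inv_le_comm₀ (by positivity) (by norm_num)]
    norm_num; linarith
  calc Real.exp (p/2-1) * ν.real B + Real.exp (p/2) * (1 - ν.real B)
      = Real.exp (p/2) * (1 - (1 - Real.exp (-1)) * ν.real B) := by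
        rw [sub_eq_add_neg (p/2), Real.exp_add]; ring
    _ ≤ Real.exp (p/2) * Real.exp (-(p/2)) := by
        gcongr
        have := Real.add_one_le_exp (-(p/2))
        nlinarith
    _ = 1 := by rw [← Real.exp_add]; simp

instance (n : ℕ) : IsProbabilityMeasure (stdGaussianPi n) := by
  unfold stdGaussianPi; infer_instance

lemma tail_bound (x A t : ℝ) (hx : |x| ≤ A) (hA : A ≤ t) :
    (gaussianReal 0 1).real {z | t < |x + z|} ≤ 2 * Real.exp (-(t - A) ^ 2 / 2) := by
  have hsub : HasSubgaussianMGF (fun z : ℝ => z) 1 (gaussianReal 0 1) :=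
    { integrable_exp_mul := fun s => integrable_exp_mul_gaussianReal s
      mgf_le := fun s => by rw [mgf_fun_id_gaussianReal]; simp }
  have h1 := hsub.measure_ge_le (ε := t - A) (by linarith)
  have h2 := hsub.neg.measure_ge_le (ε := t - A) (by linarith)
  have hss : {z : ℝ | t < |x + z|} ⊆ {z | t - A ≤ z} ∪ {z | t - A ≤ (-fun z : ℝ => z) z} := by
    intro z hz
    have hz' : t < |x + z| := hz
    have hx' := abs_le.1 hx
    rcases lt_abs.1 hz' with h | h
    · left; show t - A ≤ z; linarith
    · right; show t - A ≤ -z; linarith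
  refine (measureReal_mono hss).trans ((measureReal_union_le _ _).trans ?_)
  simp only [NNReal.coe_one, mul_one] at h1 h2
  linarith

lemma count_bound {n : ℕ} (x : Fin n → ℝ) (A t p : ℝ) (hx : ∀ j, |x j| ≤ A) (hA : A ≤ t)
    (hp : 0 < p) (hn : 0 < n) :
    (stdGaussianPi n).real {z | n * p / 4 < ∑ j, (if t < |x j + z j| then (1:ℝ) else 0)}
      ≤ 8 * Real.exp (-(t - A) ^ 2 / 2) / p := by
  set μ := stdGaussianPi n
  have hn' : (0:ℝ) < n := by exact_mod_cast hn
  have hms : ∀ j, MeasurableSet {z : ℝ | t < |x j + z|} := fun j =>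
    measurableSet_lt measurable_const (by fun_prop)
  have hms' : ∀ j, MeasurableSet {z : Fin n → ℝ | t < |x j + z j|} := fun j =>
    measurableSet_lt measurable_const (by fun_prop)
  have hind : ∀ j, (fun z : Fin n → ℝ => if t < |x j + z j| then (1:ℝ) else 0)
      = Set.indicator {z : Fin n → ℝ | t < |x j + z j|} (fun _ => 1) := by
    intro j; ext z; simp [Set.indicator_apply]
  have hIntegrable : ∀ j, Integrable (fun z : Fin n → ℝ => if t < |x j + z j| then (1:ℝ) else 0) μ := by
    intro j; rw [hind]
    exact (integrable_const _).indicator (hms' j)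
  have hI : ∫ z, ∑ j, (if t < |x j + z j| then (1:ℝ) else 0) ∂μ
      ≤ n * (2 * Real.exp (-(t - A) ^ 2 / 2)) := by
    rw [integral_finsetSum _ (fun j _ => hIntegrable j)]
    calc _ ≤ ∑ j : Fin n, 2 * Real.exp (-(t - A) ^ 2 / 2) := by
          refine Finset.sum_le_sum fun j _ => ?_
          rw [hind, integral_indicator_const _ (hms' j)]
          simp only [smul_eq_mul, mul_one]
          refine le_trans (le_of_eq ?_) (tail_bound (x j) A t (hx j) hA)
          have := (measurePreserving_eval (fun _ : Fin n => gaussianReal 0 1) j).measureReal_preimage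
            (hms j).nullMeasurableSet
          exact this
      _ = _ := by simp
  have hM := mul_meas_ge_le_integral_of_nonneg (μ := μ)
    (f := fun z => ∑ j, (if t < |x j + z j| then (1:ℝ) else 0))
    (Filter.Eventually.of_forall fun z => Finset.sum_nonneg fun j _ => by split_ifs <;> norm_num)
    (integrable_finsetSum _ (fun j _ => hIntegrable j)) (n * p / 4)
  have hmono : μ.real {z | n * p / 4 < ∑ j, (if t < |x j + z j| then (1:ℝ) else 0)}
      ≤ μ.real {z | n * p / 4 ≤ ∑ j, (if t < |x j + z j| then (1:ℝ) else 0)} :=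
    measureReal_mono fun z hz => le_of_lt (Set.mem_ofPred.1 hz)
  refine hmono.trans ?_
  rw [le_div_iff₀ hp]
  have h3 := hM.trans hI
  have : (n:ℝ) * (p / 4 * μ.real {z | n * p / 4 ≤ ∑ j, (if t < |x j + z j| then (1:ℝ) else 0)})
      ≤ n * (2 * Real.exp (-(t - A) ^ 2 / 2)) := by
    calc _ = n * p / 4 * μ.real {z | n * p / 4 ≤ ∑ j, (if t < |x j + z j| then (1:ℝ) else 0)} := by ring
      _ ≤ _ := h3
  have := le_of_mul_le_mul_left this hn'
  linarith

/-- fourth moment -/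
noncomputable def m4 : ℝ := ∫ z, z ^ 4 ∂(gaussianReal 0 1)

lemma int_pow (k : ℕ) : Integrable (fun z : ℝ => z ^ k) (gaussianReal 0 1) := by
  have h := (memLp_id_gaussianReal (μ := 0) (v := 1) k).integrable_norm_pow'
  refine h.mono' (by fun_prop) (Filter.Eventually.of_forall fun z => ?_)
  simp

lemma int_sq : ∫ z, z ^ 2 ∂(gaussianReal 0 1) = 1 := by
  have h := variance_fun_id_gaussianReal (μ := 0) (v := 1)
  rw [variance_of_integral_eq_zero (by fun_prop) (by simp)] at h
  simpa using h

lemma m4_nonneg : 0 ≤ m4 := integral_nonneg fun z => by positivity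

lemma memLp_X (a P : ℝ) : MemLp (fun z : ℝ => 2 * a * z - P * z ^ 2) 2 (gaussianReal 0 1) := by
  rw [memLp_two_iff_integrable_sq (by fun_prop)]
  have : (fun z : ℝ => (2 * a * z - P * z ^ 2) ^ 2)
    = fun z => 4 * a^2 * z^2 + (-4 * a * P) * z^3 + P^2 * z^4 := by ext z; ring
  rw [this]
  exact (((int_pow 2).const_mul _).add ((int_pow 3).const_mul _)).add ((int_pow 4).const_mul _)

lemma var_X (a P : ℝ) : Var[fun z : ℝ => 2 * a * z - P * z ^ 2; gaussianReal 0 1]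
    ≤ 8 * a ^ 2 + 2 * P ^ 2 * m4 := by
  refine (variance_le_expectation_sq (by fun_prop)).trans ?_
  have : 8 * a ^ 2 + 2 * P ^ 2 * m4 = ∫ z, (8 * a^2 * z^2 + 2 * P^2 * z^4) ∂(gaussianReal 0 1) := by
    rw [integral_add ((int_pow 2).const_mul _) ((int_pow 4).const_mul _), integral_const_mul,
      integral_const_mul, int_sq, m4]; ring
  rw [this]
  refine integral_mono (memLp_X a P).integrable_sq
    (((int_pow 2).const_mul _).add ((int_pow 4).const_mul _)) fun z => ?_
  show (2 * a * z - P * z ^ 2) ^ 2 ≤ 8 * a^2 * z^2 + 2 * P^2 * z^4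
  nlinarith [sq_nonneg (2 * a * z + P * z ^ 2)]

lemma mean_X (a P : ℝ) : ∫ z, (2 * a * z - P * z ^ 2) ∂(gaussianReal 0 1) = -P := by
  have h1 : Integrable (fun z : ℝ => z) (gaussianReal 0 1) := by simpa using int_pow 1
  rw [integral_sub (h1.const_mul _) ((int_pow 2).const_mul _), integral_const_mul,
    integral_const_mul, int_sq]
  simp

lemma cheb_bound {n : ℕ} (x : Fin n → ℝ) (P K : ℝ) (hP : 0 < P) (hK : 0 < K) (hn : 0 < n)
    (hx : ∑ j, x j ^ 2 ≤ n * P) :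
    (stdGaussianPi n).real {z | K * Real.sqrt n <
        ∑ j, (x j ^ 2 + 2 * x j * z j - P * z j ^ 2) / (2 * (1 + P))}
      ≤ (8 * P + 2 * P ^ 2 * m4) / K ^ 2 := by
  have hn' : (0:ℝ) < n := by exact_mod_cast hn
  set μ := stdGaussianPi n
  let X : Fin n → ℝ → ℝ := fun j z => 2 * x j * z - P * z ^ 2
  let Sm : (Fin n → ℝ) → ℝ := ∑ j, fun z => X j (z j)
  have hmp : ∀ j, MeasurePreserving (Function.eval j) μ (gaussianReal 0 1) := fun j =>
    measurePreserving_eval (fun _ : Fin n => gaussianReal 0 1) j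
  have hL : ∀ j, MemLp (fun z : Fin n → ℝ => X j (z j)) 2 μ := fun j =>
    (memLp_X (x j) P).comp_measurePreserving (hmp j)
  have hSL : MemLp Sm 2 μ := memLp_finsetSum' _ fun j _ => hL j
  have hvar : Var[Sm; μ] ≤ n * (8 * P + 2 * P ^ 2 * m4) := by
    have := variance_sum_pi (μ := fun _ : Fin n => gaussianReal 0 1) (X := X)
      (fun j => memLp_X (x j) P)
    calc Var[Sm; μ] = ∑ j, Var[X j; gaussianReal 0 1] := this
      _ ≤ ∑ j, (8 * x j ^ 2 + 2 * P ^ 2 * m4) := Finset.sum_le_sum fun j _ => var_X (x j) P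
      _ = 8 * ∑ j, x j ^ 2 + n * (2 * P ^ 2 * m4) := by
        rw [Finset.sum_add_distrib, Finset.mul_sum]; simp
      _ ≤ _ := by nlinarith
  have hmean : ∫ z, Sm z ∂μ = - (n * P) := by
    have : ∀ z, Sm z = ∑ j, X j (z j) := fun z => by simp [Sm]
    simp_rw [this]
    rw [integral_finsetSum _ fun j _ => (hL j).integrable (by norm_num)]
    have : ∀ j, ∫ z, X j (z j) ∂μ = -P := by
      intro j
      rw [← mean_X (x j) P]
      have hm : AEStronglyMeasurable (X j) (Measure.map (Function.eval j) μ) := by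
        apply Measurable.aestronglyMeasurable; fun_prop
      rw [← (hmp j).map_eq, integral_map (hmp j).measurable.aemeasurable hm]
    simp [this]
  have hc : 0 < 2 * (1 + P) * (K * Real.sqrt n) := by positivity
  have hch := meas_ge_le_variance_div_sq hSL hc
  have hch' : μ.real {ω | 2 * (1 + P) * (K * Real.sqrt n) ≤ |Sm ω - ∫ z, Sm z ∂μ|}
      ≤ Var[Sm; μ] / (2 * (1 + P) * (K * Real.sqrt n)) ^ 2 :=
    ENNReal.toReal_le_of_le_ofReal (div_nonneg (variance_nonneg _ _) (by positivity)) hch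
  refine (measureReal_mono ?_).trans (hch'.trans ?_)
  · intro z hz
    simp only [Set.mem_ofPred_eq] at hz ⊢
    rw [← Finset.sum_div, lt_div_iff₀ (by positivity)] at hz
    have e : Sm z = ∑ j, (2 * x j * z j - P * z j ^ 2) := by simp [Sm, X]
    have e2 : ∑ j, (x j ^ 2 + 2 * x j * z j - P * z j ^ 2) = ∑ j, x j ^ 2 + Sm z := by
      rw [e, ← Finset.sum_add_distrib]
      exact Finset.sum_congr rfl fun j _ => by ring
    rw [e2] at hz
    rw [hmean]
    refine le_trans ?_ (le_abs_self _)
    linarith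
  · have hD : 0 ≤ 8 * P + 2 * P ^ 2 * m4 := by have := m4_nonneg; positivity
    rw [div_le_div_iff₀ (by positivity) (by positivity)]
    have : (2 * (1 + P) * (K * Real.sqrt n)) ^ 2 = (2 * (1+P))^2 * (n * K^2) := by
      rw [mul_pow, mul_pow K, Real.sq_sqrt hn'.le]; ring
    rw [this]
    have h1 : 1 ≤ (2 * (1+P))^2 := by nlinarith
    calc Var[Sm; μ] * K ^ 2 ≤ (n * (8 * P + 2 * P ^ 2 * m4)) * K^2 := by gcongr
      _ = (8 * P + 2 * P ^ 2 * m4) * (1 * (n * K^2)) := by ring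
      _ ≤ _ := by gcongr

/-- tilted output measure -/
noncomputable def Q (n : ℕ) (V : ℝ≥0) (p t : ℝ) : Measure (Fin n → ℝ) :=
  (Measure.pi (fun _ : Fin n => gaussianReal 0 V)).withDensity
    (fun y => ∏ j, ENNReal.ofReal (Real.exp (tilt p t (y j))))

lemma Q_univ (n : ℕ) (V : ℝ≥0) (hV : 0 < V) (t p : ℝ) (ht : 0 ≤ t)
    (hp : p ≤ gaussianPDFReal 0 V (t + 1)) : Q n V p t Set.univ ≤ 1 := by
  have hm : Measurable (fun y => ENNReal.ofReal (Real.exp (tilt p t y))) :=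
    ENNReal.measurable_ofReal.comp (Real.measurable_exp.comp (measurable_tilt _ _))
  rw [Q, withDensity_apply _ MeasurableSet.univ, Measure.restrict_univ,
    lintegral_prod_pi _ (fun _ y => ENNReal.ofReal (Real.exp (tilt p t y))) (fun _ => hm)]
  exact Finset.prod_le_one' fun j _ => tilt_mass V hV t p ht hp

lemma change_measure {n : ℕ} (V : ℝ≥0) (hV : 0 < V) (x : Fin n → ℝ) (p t τ : ℝ)
    (S : Set (Fin n → ℝ)) (hS : MeasurableSet S) :
    stdGaussianPi n {z | x + z ∈ S} ≤
      stdGaussianPi n {z | τ < ∑ j, (ll V (x j) (x j + z j) - tilt p t (x j + z j))}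
        + ENNReal.ofReal (Real.exp τ) * Q n V p t S := by
  let L : (Fin n → ℝ) → ℝ := fun y => ∑ j, (ll V (x j) (y j) - tilt p t (y j))
  have hLm : Measurable L := by
    refine Finset.measurable_sum _ fun j _ => ?_
    exact ((measurable_ll _ _).comp (measurable_pi_apply j)).sub
      ((measurable_tilt _ _).comp (measurable_pi_apply j))
  have hB : MeasurableSet {y | τ < L y} := measurableSet_lt measurable_const hLm
  have hfm : ∀ j, Measurable (fun y => ENNReal.ofReal (Real.exp (ll V (x j) y))) := fun j =>
    ENNReal.measurable_ofReal.comp (Real.measurable_exp.comp (measurable_ll _ _))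
  have hmap : (stdGaussianPi n).map (fun z => x + z) =
      (Measure.pi (fun _ : Fin n => gaussianReal 0 V)).withDensity
        (fun y => ∏ j, ENNReal.ofReal (Real.exp (ll V (x j) (y j)))) := by
    have hprob : ∀ j, IsProbabilityMeasure ((gaussianReal 0 V).withDensity
        (fun y => ENNReal.ofReal (Real.exp (ll V (x j) y)))) := fun j => by
      rw [← gaussian_density V hV]; infer_instance
    rw [← pi_withDensity' (gaussianReal 0 V) _ hfm]
    have hprob2 : ∀ j, IsProbabilityMeasure ((gaussianReal 0 1).map (fun z => x j + z)) :=
      fun j => by rw [gaussianReal_map_const_add]; infer_instance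
    have := Measure.pi_map_pi (μ := fun _ : Fin n => gaussianReal 0 1)
      (f := fun j z => x j + z) (fun j => by fun_prop)
    refine Eq.trans this ?_
    congr 1
    ext1 j
    rw [gaussianReal_map_const_add, ← gaussian_density V hV]
    simp
  have hadd : Measurable (fun z : Fin n → ℝ => x + z) := by fun_prop
  have hS' : stdGaussianPi n {z | x + z ∈ S} ≤ stdGaussianPi n {z | τ < L (x + z)}
      + stdGaussianPi n ((fun z => x + z) ⁻¹' (S \ {y | τ < L y})) := by
    refine (measure_mono ?_).trans (measure_union_le _ _)
    intro z hz
    by_cases h : τ < L (x + z)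
    · exact Or.inl h
    · exact Or.inr ⟨hz, h⟩
  refine hS'.trans (add_le_add le_rfl ?_)
  rw [← Measure.map_apply hadd (hS.diff hB), hmap, withDensity_apply _ (hS.diff hB)]
  calc _ ≤ ∫⁻ y in S \ {y | τ < L y}, ENNReal.ofReal (Real.exp τ) *
        ∏ j, ENNReal.ofReal (Real.exp (tilt p t (y j))) ∂Measure.pi (fun _ : Fin n => gaussianReal 0 V) := by
        refine setLIntegral_mono' (hS.diff hB) fun y hy => ?_
        rw [← ENNReal.ofReal_prod_of_nonneg (fun _ _ => by positivity),
          ← ENNReal.ofReal_prod_of_nonneg (fun _ _ => by positivity),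
          ← ENNReal.ofReal_mul (by positivity), ← Real.exp_sum, ← Real.exp_sum, ← Real.exp_add]
        refine ENNReal.ofReal_le_ofReal (Real.exp_le_exp.2 ?_)
        have h : L y ≤ τ := not_lt.1 hy.2
        simp only [L, Finset.sum_sub_distrib] at h
        linarith
    _ = ENNReal.ofReal (Real.exp τ) * Q n V p t (S \ {y | τ < L y}) := by
        rw [lintegral_const_mul' _ _ ENNReal.ofReal_ne_top, Q, withDensity_apply _ (hS.diff hB)]
    _ ≤ _ := by gcongr; exact Set.sdiff_subset

lemma codeword_bound {n : ℕ} (hn : 0 < n) (P : ℝ) (hP : 0 < P) (V : ℝ≥0) (hV : (V:ℝ) = 1 + P)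
    (x : Fin n → ℝ)
    (hx : ∑ j, x j ^ 2 ≤ n * P) (A t p K : ℝ) (hxA : ∀ j, |x j| ≤ A) (hA0 : 0 ≤ A) (hA : A ≤ t)
    (hp : 0 < p) (hK : 0 < K) (hpt : p ≤ gaussianPDFReal 0 V (t + 1))
    (S : Set (Fin n → ℝ)) (hS : MeasurableSet S) :
    (stdGaussianPi n).real {z | x + z ∈ S} ≤
      (8 * P + 2 * P ^ 2 * m4) / K ^ 2 + 8 * Real.exp (-(t - A) ^ 2 / 2) / p
      + Real.exp (n * (1 / 2 * Real.log (1 + P)) + K * Real.sqrt n - n * p / 4) *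
        (Q n V p t).real S := by
  have hV0 : 0 < V := by
    have : (0:ℝ) < V := by rw [hV]; linarith
    exact_mod_cast this
  set τ := n * (1 / 2 * Real.log (1 + P)) + K * Real.sqrt n - n * p / 4 with hτ
  have hQ := Q_univ n V hV0 t p (hA0.trans hA) hpt
  have hQfin : Q n V p t S ≠ ∞ :=
    ((measure_mono (Set.subset_univ S)).trans_lt (hQ.trans_lt ENNReal.one_lt_top)).ne
  have h := change_measure V hV0 x p t τ S hS
  have h' : (stdGaussianPi n).real {z | x + z ∈ S} ≤
      (stdGaussianPi n).real {z | τ < ∑ j, (ll V (x j) (x j + z j) - tilt p t (x j + z j))}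
        + Real.exp τ * (Q n V p t).real S := by
    have h1 := ENNReal.toReal_mono (ENNReal.add_ne_top.2 ⟨measure_ne_top _ _,
      ENNReal.mul_ne_top ENNReal.ofReal_ne_top hQfin⟩) h
    rw [ENNReal.toReal_add (measure_ne_top _ _) (ENNReal.mul_ne_top ENNReal.ofReal_ne_top hQfin),
      ENNReal.toReal_mul, ENNReal.toReal_ofReal (by positivity)] at h1
    exact h1
  refine h'.trans (add_le_add ?_ le_rfl)
  refine le_trans ?_ (add_le_add (cheb_bound x P K hP hK hn hx)
    (count_bound x A t p hxA hA hp hn))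
  refine le_trans (measureReal_mono ?_) (measureReal_union_le _ _)
  intro z hz
  by_contra hcon
  simp only [Set.mem_union, Set.mem_ofPred_eq, not_or, not_lt] at hcon
  obtain ⟨h1, h2⟩ := hcon
  have hz' : τ < ∑ j, (ll V (x j) (x j + z j) - tilt p t (x j + z j)) := hz
  have e : ∑ j, (ll V (x j) (x j + z j) - tilt p t (x j + z j))
      = n * (1 / 2 * Real.log (1 + P)) - n * (p / 2)
        + ∑ j, (x j ^ 2 + 2 * x j * z j - P * z j ^ 2) / (2 * (1 + P))
        + ∑ j, (if t < |x j + z j| then (1:ℝ) else 0) := by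
    have c1 : (n:ℝ) * (1 / 2 * Real.log (1 + P)) - n * (p / 2)
      = ∑ j : Fin n, (1 / 2 * Real.log (1 + P) - p / 2) := by
      simp
    rw [c1, ← Finset.sum_add_distrib, ← Finset.sum_add_distrib]
    refine Finset.sum_congr rfl fun j _ => ?_
    rw [ll, tilt, hV]
    have : (1 + P) ≠ 0 := by positivity
    field_simp
    ring
  rw [e, hτ] at hz'
  linarith

lemma quad_tendsto (k b c : ℝ) (hk : 0 < k) :
    Filter.Tendsto (fun u : ℝ => k * u ^ 2 + b * u + c) Filter.atTop Filter.atTop := by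
  have h1 : Filter.Tendsto (fun u : ℝ => u * (k * u + b)) Filter.atTop Filter.atTop :=
    Filter.tendsto_id.atTop_mul_atTop₀
      (Filter.tendsto_atTop_add_const_right _ _ (Filter.tendsto_id.const_mul_atTop hk))
  refine (Filter.tendsto_atTop_add_const_right _ c h1).congr fun u => by ring

lemma exists_scale (P α δ : ℝ) (hP : 0 < P) (hα : α < 1) (hδ0 : 0 < δ)
    (hδ : δ < (1 - α) * (Real.sqrt (1 + P) - 1) ^ 2) :
    ∃ s : ℝ, 1 < s ∧ s ^ 2 < (s - 1) ^ 2 * (1 + P) ∧ s ^ 2 * δ < (1 - α) * (1 + P) := by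
  set r := Real.sqrt (1 + P) with hr
  have hr2 : r ^ 2 = 1 + P := Real.sq_sqrt (by linarith)
  have hr1 : 1 < r := by
    rw [hr]; exact Real.lt_sqrt_of_sq_lt (by linarith)
  have hα' : 0 < 1 - α := by linarith
  have key : r / (r - 1) < r * Real.sqrt ((1 - α) / δ) := by
    rw [div_eq_mul_inv]
    refine mul_lt_mul_of_pos_left ?_ (by linarith)
    refine Real.lt_sqrt_of_sq_lt ?_
    have : 0 < r - 1 := by linarith
    rw [inv_pow, lt_div_iff₀ hδ0, inv_mul_lt_iff₀ (by positivity)]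
    linarith
  obtain ⟨s, h1, h2⟩ := exists_between key
  have hr0 : 0 < r - 1 := by linarith
  have h1' : r < s * (r - 1) := (div_lt_iff₀ hr0).1 h1
  have hs1 : 1 < s := by
    by_contra h
    push Not at h
    nlinarith
  refine ⟨s, hs1, ?_, ?_⟩
  · rw [← hr2, ← mul_pow]
    have : s < (s - 1) * r := by linarith
    exact pow_lt_pow_left₀ this (by linarith) (by norm_num)
  · have h3 : s ^ 2 < (r * Real.sqrt ((1 - α) / δ)) ^ 2 :=
      pow_lt_pow_left₀ h2 (by linarith) (by norm_num)
    rw [mul_pow, hr2, Real.sq_sqrt (by positivity)] at h3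
    calc s ^ 2 * δ < (1 + P) * ((1 - α) / δ) * δ := by gcongr
      _ = _ := by field_simp

lemma asymp (P α δ : ℝ) (hP : 0 < P) (hα : α < 1) (hδ0 : 0 < δ)
    (V : ℝ≥0) (hV : (V : ℝ) = 1 + P)
    (hδ : δ < (1 - α) * (Real.sqrt (1 + P) - 1) ^ 2) :
    ∃ s : ℝ, 1 < s ∧ ∀ η G : ℝ, 0 < η → 0 < G → ∃ N : ℕ, ∀ n : ℕ, N ≤ n →
      8 * Real.exp (-(s * Real.sqrt (2 * δ * Real.log n) - Real.sqrt (2 * δ * Real.log n)) ^ 2 / 2)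
        / gaussianPDFReal 0 V (s * Real.sqrt (2 * δ * Real.log n) + 1) ≤ η ∧
      G * (n : ℝ) ^ α < n * gaussianPDFReal 0 V (s * Real.sqrt (2 * δ * Real.log n) + 1) / 4 := by
  obtain ⟨s, hs1, hs2, hs3⟩ := exists_scale P α δ hP hα hδ0 hδ
  refine ⟨s, hs1, fun η G hη hG => ?_⟩
  have hV0 : (0:ℝ) < V := by rw [hV]; linarith
  set a := Real.sqrt (2 * δ) with ha
  have ha2 : a ^ 2 = 2 * δ := Real.sq_sqrt (by linarith)
  set c0 := (Real.sqrt (2 * Real.pi * V))⁻¹ with hc0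
  have hc0p : 0 < c0 := by rw [hc0]; positivity
  have hu : Filter.Tendsto (fun n : ℕ => Real.sqrt (Real.log n)) Filter.atTop Filter.atTop :=
    Real.tendsto_sqrt_atTop.comp (Real.tendsto_log_atTop.comp tendsto_natCast_atTop_atTop)
  have k1 : 0 < a ^ 2 * (s - 1) ^ 2 / 2 - (s * a) ^ 2 / (2 * V) := by
    have : (s * a) ^ 2 / (2 * V) < a ^ 2 * (s - 1) ^ 2 / 2 := by
      rw [div_lt_div_iff₀ (by positivity) (by norm_num), mul_pow, hV]
      have : 0 < a ^ 2 := by rw [ha2]; linarith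
      nlinarith
    linarith
  have k2 : 0 < (1 - α) - (s * a) ^ 2 / (2 * V) := by
    have : (s * a) ^ 2 / (2 * V) < 1 - α := by
      rw [div_lt_iff₀ (by positivity), mul_pow, ha2, hV]
      linarith
    linarith
  have t1 := (quad_tendsto _ (-(s * a / V)) (-(1 / (2 * V))) k1).comp hu
  have t2 := (quad_tendsto _ (-(s * a / V)) (-(1 / (2 * V))) k2).comp hu
  have E1 := t1.eventually_ge_atTop (Real.log (8 / (c0 * η)))
  have E2 := t2.eventually_gt_atTop (Real.log (4 * G / c0))
  obtain ⟨N, hN⟩ := Filter.eventually_atTop.1 (E1.and (E2.and (Filter.eventually_ge_atTop 1)))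
  refine ⟨N, fun n hn => ?_⟩
  obtain ⟨h1, h2, hn1⟩ := hN n hn
  simp only [Function.comp_apply] at h1 h2
  have hn1' : (1:ℝ) ≤ n := by exact_mod_cast hn1
  have hn0 : (0:ℝ) < n := by linarith
  set u := Real.sqrt (Real.log n) with hudef
  have hu2 : u ^ 2 = Real.log n := Real.sq_sqrt (Real.log_nonneg hn1')
  have hA : Real.sqrt (2 * δ * Real.log n) = a * u := Real.sqrt_mul (by linarith) _
  have hpdf : gaussianPDFReal 0 V (s * (a * u) + 1)
      = c0 * Real.exp (-(s * (a * u) + 1) ^ 2 / (2 * V)) := by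
    rw [gaussianPDFReal, sub_zero]
  rw [hA, hpdf]
  constructor
  · rw [div_le_iff₀ (by positivity)]
    have h3 : 8 / (c0 * η) ≤ Real.exp (-(s * (a * u) + 1) ^ 2 / (2 * V)
        - (-(s * (a * u) - a * u) ^ 2 / 2)) := by
      rw [← Real.log_le_iff_le_exp (by positivity)]
      refine h1.trans (le_of_eq ?_)
      field_simp
      ring
    rw [Real.exp_sub, div_le_div_iff₀ (by positivity) (by positivity)] at h3
    linarith
  · have h3 : 4 * G / c0 < Real.exp (u ^ 2 - (s * (a * u) + 1) ^ 2 / (2 * V) - α * u ^ 2) := by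
      rw [← Real.log_lt_iff_lt_exp (by positivity)]
      refine h2.trans_le (le_of_eq ?_)
      field_simp
      ring
    rw [Real.exp_sub, sub_eq_add_neg, Real.exp_add, hu2, Real.exp_log hn0,
      div_lt_div_iff₀ (by positivity) (by positivity)] at h3
    rw [Real.rpow_def_of_pos hn0, mul_comm (Real.log _) α, neg_div]
    linarith

/-- Strong converse: sum over a sub-collection of codewords of the correct decoding
probabilities. -/
lemma sum_bound {n M : ℕ} (hn : 0 < n) (P : ℝ) (hP : 0 < P) (V : ℝ≥0) (hV : (V:ℝ) = 1 + P)
    (f : Fin M → Fin n → ℝ) (g : (Fin n → ℝ) → Fin M) (hg : Measurable g)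
    (hf : ∀ i, ∑ j, f i j ^ 2 ≤ n * P) (A t p K : ℝ) (hA0 : 0 ≤ A) (hA : A ≤ t)
    (hp : 0 < p) (hK : 0 < K) (hpt : p ≤ gaussianPDFReal 0 V (t + 1))
    (B : Finset (Fin M)) (hB : ∀ i ∈ B, ∀ j, |f i j| ≤ A) :
    ∑ i ∈ B, (stdGaussianPi n).real {z | g (f i + z) = i} ≤
      B.card * ((8 * P + 2 * P ^ 2 * m4) / K ^ 2 + 8 * Real.exp (-(t - A) ^ 2 / 2) / p)
      + Real.exp (n * (1 / 2 * Real.log (1 + P)) + K * Real.sqrt n - n * p / 4) := by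
  have hV0 : 0 < V := by
    have : (0:ℝ) < V := by rw [hV]; linarith
    exact_mod_cast this
  have hQ := Q_univ n V hV0 t p (hA0.trans hA) hpt
  have : IsFiniteMeasure (Q n V p t) := ⟨hQ.trans_lt ENNReal.one_lt_top⟩
  have hS : ∀ i, MeasurableSet (g ⁻¹' {i}) := fun i => hg (measurableSet_singleton i)
  have hsum : ∑ i ∈ B, (Q n V p t).real (g ⁻¹' {i}) ≤ 1 := by
    rw [← measureReal_biUnion_finset (fun i _ j _ hij => (Disjoint.preimage g (by simpa using hij)))
      (fun i _ => hS i)]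
    refine (measureReal_mono (Set.subset_univ _)).trans ?_
    exact ENNReal.toReal_le_of_le_ofReal zero_le_one (by simpa using hQ)
  calc _ ≤ ∑ i ∈ B, (((8 * P + 2 * P ^ 2 * m4) / K ^ 2 + 8 * Real.exp (-(t - A) ^ 2 / 2) / p)
      + Real.exp (n * (1 / 2 * Real.log (1 + P)) + K * Real.sqrt n - n * p / 4)
        * (Q n V p t).real (g ⁻¹' {i})) :=
        Finset.sum_le_sum fun i hi => codeword_bound hn P hP V hV (f i) (hf i) A t p K
          (hB i hi) hA0 hA hp hK hpt (g ⁻¹' {i}) (hS i)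
    _ ≤ _ := by
        rw [Finset.sum_add_distrib, Finset.sum_const, nsmul_eq_mul, ← Finset.mul_sum]
        gcongr
        exact mul_le_of_le_one_right (by positivity) hsum

end PAPR

theorem papr_lower_bound_good_codes
    (P : ℝ) (hP : 0 < P) (ε α γ δ : ℝ)
    (hε : ε ∈ Set.Ioo (0 : ℝ) (1 / 2)) (hα : α ∈ Set.Ico (1 / 2 : ℝ) 1) (hγ : 0 < γ)
    (hδ : δ < (1 - α) * (Real.sqrt (1 + P) - 1) ^ 2) :
    ∃ N₀ : ℕ, ∀ n : ℕ, N₀ ≤ n →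
      ∀ M : ℕ, ∀ f : Fin M → (Fin n → ℝ), ∀ g : (Fin n → ℝ) → Fin M,
        Measurable g →
        (∀ i, ∑ j, (f i j) ^ 2 ≤ n * P) →
        (1 / (M : ℝ)) * ∑ i, ((stdGaussianPi n) {z | g (f i + z) ≠ i}).toReal ≤ ε →
        (n : ℝ) * ((1 / 2) * Real.log (1 + P)) - γ * (n : ℝ) ^ α ≤ Real.log M →
        ∀ U : Matrix (Fin n) (Fin n) ℝ, U ∈ Matrix.orthogonalGroup (Fin n) ℝ →
          (M : ℝ) / 2 ≤
            ({i : Fin M | Real.sqrt (2 * δ * Real.log n) ≤ ‖U.mulVec (f i)‖}.ncard : ℝ) := by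
  obtain ⟨hε0, hε2⟩ := hε
  obtain ⟨hα2, hα1⟩ := hα
  rcases le_or_gt δ 0 with hδ0 | hδ0
  · refine ⟨1, fun n hn M f g _ _ _ _ U _ => ?_⟩
    have hz : Real.sqrt (2 * δ * Real.log n) = 0 := by
      refine Real.sqrt_eq_zero_of_nonpos ?_
      have : 0 ≤ Real.log n := Real.log_nonneg (by exact_mod_cast hn)
      nlinarith
    have : {i : Fin M | Real.sqrt (2 * δ * Real.log n) ≤ ‖U.mulVec (f i)‖} = Set.univ := by
      ext i; simp [hz]
    rw [this, Set.ncard_univ, Nat.card_eq_fintype_card, Fintype.card_fin]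
    have : (0:ℝ) ≤ M := Nat.cast_nonneg M
    linarith
  let V : ℝ≥0 := ⟨1 + P, by linarith⟩
  have hV : (V : ℝ) = 1 + P := rfl
  obtain ⟨s, hs1, hs⟩ := PAPR.asymp P α δ hP hα1 hδ0 V hV hδ
  set η := (1 - 2 * ε) / 4 with hη
  have hη0 : 0 < η := by rw [hη]; linarith
  set D := 8 * P + 2 * P ^ 2 * PAPR.m4 with hD
  have hD0 : 0 < D := by have := PAPR.m4_nonneg; positivity
  set K := Real.sqrt (D / η) with hKdef
  have hK : 0 < K := Real.sqrt_pos.2 (by positivity)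
  have hK2 : D / K ^ 2 = η := by
    rw [hKdef, Real.sq_sqrt (by positivity)]; field_simp
  set G := γ + K + |Real.log η| with hG
  have hG0 : 0 < G := by positivity
  obtain ⟨N, hN⟩ := hs η G hη0 hG0
  refine ⟨max N 1, fun n hn M f g hg hf herr hlog U hU => ?_⟩
  have hnN : N ≤ n := le_trans (le_max_left _ _) hn
  have hn1 : 1 ≤ n := le_trans (le_max_right _ _) hn
  have hn1' : (1:ℝ) ≤ n := by exact_mod_cast hn1
  obtain ⟨hN1, hN2⟩ := hN n hnN
  set A := Real.sqrt (2 * δ * Real.log n) with hA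
  have hA0 : 0 ≤ A := Real.sqrt_nonneg _
  set p := gaussianPDFReal 0 V (s * A + 1) with hp
  have hp0 : 0 < p := gaussianPDFReal_pos _ _ _ (by
    have : (0:ℝ) < V := by rw [hV]; linarith
    exact (by exact_mod_cast this : 0 < V).ne')
  have hM0 : 0 < M := by
    have := (g 0).pos; exact this
  have hM0' : (0:ℝ) < M := by exact_mod_cast hM0
  by_contra hcon
  push Not at hcon
  set T : Set (Fin M) := {i : Fin M | A ≤ ‖U.mulVec (f i)‖} with hT
  classical
  set B : Finset (Fin M) := Finset.univ.filter (fun i => ‖U.mulVec (f i)‖ < A) with hBdef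
  have hcard : (T.ncard : ℝ) + B.card = M := by
    have h1 : T = ↑(Finset.univ.filter (fun i => ¬ ‖U.mulVec (f i)‖ < A)) := by
      ext i; simp [hT]
    rw [h1, Set.ncard_coe_finset]
    have := Finset.card_filter_add_card_filter_not (s := (Finset.univ : Finset (Fin M)))
      (fun i => ‖U.mulVec (f i)‖ < A)
    rw [Finset.card_univ, Fintype.card_fin] at this
    have h2 : ((Finset.univ.filter (fun i => ‖U.mulVec (f i)‖ < A)).card : ℝ)
      + (Finset.univ.filter (fun i => ¬ ‖U.mulVec (f i)‖ < A)).card = M := by exact_mod_cast this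
    linarith
  have hBM : (M:ℝ) / 2 < B.card := by linarith
  -- rotated code
  let f' : Fin M → Fin n → ℝ := fun i => U.mulVec (f i)
  let g' : (Fin n → ℝ) → Fin M := fun y => g (U.transpose.mulVec y)
  have hUT : U.transpose * U = 1 := (Matrix.mem_orthogonalGroup_iff' (Fin n) ℝ).1 hU
  have hUT' : U * U.transpose = 1 := (Matrix.mem_orthogonalGroup_iff (Fin n) ℝ).1 hU
  have hUt : U.transpose ∈ Matrix.orthogonalGroup (Fin n) ℝ := by
    rw [Matrix.mem_orthogonalGroup_iff]; simpa using hUT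
  have hg' : Measurable g' := hg.comp (PAPR.measurable_mulVec _)
  have hf' : ∀ i, ∑ j, f' i j ^ 2 ≤ n * P := fun i => by
    rw [PAPR.norm_orthogonal U hU]; exact hf i
  have hB : ∀ i ∈ B, ∀ j, |f' i j| ≤ A := fun i hi j => by
    have h1 : ‖U.mulVec (f i)‖ < A := (Finset.mem_filter.1 hi).2
    have h2 := norm_le_pi_norm (f' i) j
    rw [Real.norm_eq_abs] at h2
    exact h2.trans h1.le
  have hsum := PAPR.sum_bound (by omega) P hP V hV f' g' hg' hf' A (s * A) p K hA0
    (by nlinarith) hp0 hK le_rfl B hB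
  have hms : ∀ i, MeasurableSet {z : Fin n → ℝ | g (f i + z) = i} := fun i =>
    (hg.comp (measurable_const_add (f i))) (measurableSet_singleton i)
  have hcorr : ∀ i, (stdGaussianPi n).real {z | g' (f' i + z) = i}
      = 1 - ((stdGaussianPi n) {z | g (f i + z) ≠ i}).toReal := by
    intro i
    have h1 : {z | g' (f' i + z) = i}
        = (fun z => U.transpose.mulVec z) ⁻¹' {z | g (f i + z) = i} := by
      ext z
      simp only [g', f', Set.mem_ofPred_eq, Set.mem_preimage, Matrix.mulVec_add,
        Matrix.mulVec_mulVec, hUT, Matrix.one_mulVec]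
    rw [h1, measureReal_def, ← Measure.map_apply (PAPR.measurable_mulVec _) (hms i),
      PAPR.map_orthogonal _ hUt]
    have h2 := probReal_add_probReal_compl (μ := stdGaussianPi n) (hms i)
    have h3 : {z : Fin n → ℝ | g (f i + z) = i}ᶜ = {z | g (f i + z) ≠ i} := rfl
    rw [h3] at h2
    simp only [measureReal_def] at h2
    linarith
  simp_rw [hcorr] at hsum
  rw [Finset.sum_sub_distrib] at hsum
  have herrB : ∑ i ∈ B, ((stdGaussianPi n) {z | g (f i + z) ≠ i}).toReal ≤ M * ε := by
    refine (Finset.sum_le_univ_sum_of_nonneg fun i => ENNReal.toReal_nonneg).trans ?_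
    rw [one_div, inv_mul_le_iff₀ hM0'] at herr
    exact herr
  rw [← hD, hK2] at hsum
  simp only [Finset.sum_const, nsmul_eq_mul, mul_one] at hsum
  set τ := (n:ℝ) * (1 / 2 * Real.log (1 + P)) + K * Real.sqrt n - n * p / 4 with hτ
  have h1 : (B.card : ℝ) * (η + 8 * Real.exp (-(s * A - A) ^ 2 / 2) / p) ≤ B.card * (2 * η) := by
    gcongr; linarith
  have h2 : M * η ≤ Real.exp τ := by
    have : (B.card:ℝ) * (1 - 2 * η) - M * ε ≤ Real.exp τ := by linarith
    have h3 : (M:ℝ)/2 * (1 - 2 * η) ≤ B.card * (1 - 2 * η) := by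
      apply mul_le_mul_of_nonneg_right hBM.le
      rw [hη]; linarith
    have h4 : (M:ℝ)/2 * (1 - 2 * η) - M * ε = M * η := by rw [hη]; ring
    linarith
  have h3 : Real.log M + Real.log η ≤ τ := by
    rw [← Real.log_mul hM0'.ne' hη0.ne']
    exact (Real.log_le_iff_le_exp (by positivity)).2 h2
  have h4 : Real.sqrt n ≤ (n:ℝ) ^ α := by
    rw [Real.sqrt_eq_rpow]; exact Real.rpow_le_rpow_of_exponent_le hn1' hα2
  have h5 : (1:ℝ) ≤ (n:ℝ) ^ α := Real.one_le_rpow hn1' (by linarith)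
  have h6 : -Real.log η ≤ |Real.log η| * (n:ℝ) ^ α := by
    have := neg_le_abs (Real.log η)
    have := le_mul_of_one_le_right (abs_nonneg (Real.log η)) h5
    linarith
  have h7 : K * Real.sqrt n ≤ K * (n:ℝ) ^ α := by gcongr
  rw [hG, add_mul, add_mul] at hN2
  linarith
end

section
/- Fix P > 0. There exist constants c > 0 and A₀ > 0 such that for all A ≥ A₀, the gap (1/2) ln(1+P) − C(A,P) between the unconstrained AWGN capacity and the amplitude-constrained capacity satisfies (1/2) ln(1+P) − C(A,P) ≥ c · A^{−2} · exp( −A² / (√(1+P) − 1)² ). -/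
open MeasureTheory ProbabilityTheory

open scoped Classical in
/-- Kullback–Leibler divergence (natural logarithm), valued in `EReal`:
`D(μ‖ν) = ∫ log(dμ/dν) dμ` if `μ ≪ ν` and the log-likelihood ratio is integrable,
and `+∞` otherwise. -/
noncomputable def klDiv {α : Type*} [MeasurableSpace α] (μ ν : Measure α) : EReal :=
  if μ ≪ ν ∧ Integrable (llr μ ν) μ then ((∫ x, llr μ ν x ∂μ : ℝ) : EReal) else ⊤

/-- The joint law of `(X, X+Z)` where `X ~ μ` and `Z ~ N(0,1)` is independent of `X`. -/
noncomputable def jointLaw (μ : Measure ℝ) : Measure (ℝ × ℝ) :=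
  (μ.prod (gaussianReal 0 1)).map fun p => (p.1, p.1 + p.2)

/-- The mutual information `I(X; X+Z)` for `X ~ μ` and `Z ~ N(0,1)` independent of `X`:
the KL divergence between the joint law of `(X, X+Z)` and the product of its marginals. -/
noncomputable def mutInfo (μ : Measure ℝ) : EReal :=
  klDiv (jointLaw μ) ((jointLaw μ).fst.prod (jointLaw μ).snd)

/-- The amplitude-constrained AWGN capacity `C(A,P)`: the supremum of `I(X; X+Z)` over laws of
real random variables `X` with `|X| ≤ A` almost surely and `E[X²] ≤ P`, with `Z ~ N(0,1)`
independent of `X`. -/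
noncomputable def CAP (A P : ℝ) : EReal :=
  ⨆ μ ∈ {μ : Measure ℝ | IsProbabilityMeasure μ ∧ μ {x | A < |x|} = 0 ∧ ∫ x, x ^ 2 ∂μ ≤ P},
    mutInfo μ


/-- output density -/
noncomputable def outDens (μ : Measure ℝ) (y : ℝ) : ℝ := ∫ x, gaussianPDFReal 0 1 (y - x) ∂μ

lemma gauss1_le (x : ℝ) : gaussianPDFReal 0 1 x ≤ 1 := by
  have h : gaussianPDFReal 0 1 x = (Real.sqrt (2 * Real.pi))⁻¹ * Real.exp (-x ^ 2 / 2) := by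
    simp [gaussianPDFReal]
  rw [h]
  have h1 : (1:ℝ) ≤ Real.sqrt (2 * Real.pi) := by
    rw [Real.one_le_sqrt]; nlinarith [Real.pi_gt_three]
  have h2 : Real.exp (-x ^ 2 / 2) ≤ 1 := by
    rw [Real.exp_le_one_iff]; nlinarith [sq_nonneg x]
  exact mul_le_one₀ (inv_le_one_of_one_le₀ h1) (Real.exp_pos _).le h2

lemma gauss1_int (μ : Measure ℝ) [IsProbabilityMeasure μ] (y : ℝ) :
    Integrable (fun x => gaussianPDFReal 0 1 (y - x)) μ := by
  refine Integrable.of_bound (C := 1)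
    (Measurable.aestronglyMeasurable (by fun_prop)) (ae_of_all _ fun x => ?_)
  rw [Real.norm_of_nonneg (gaussianPDFReal_nonneg _ _ _)]
  exact gauss1_le _

lemma outDens_meas (μ : Measure ℝ) [IsProbabilityMeasure μ] : Measurable (outDens μ) := by
  have : StronglyMeasurable (Function.uncurry fun (y x : ℝ) => gaussianPDFReal 0 1 (y - x)) :=
    Measurable.stronglyMeasurable (by unfold Function.uncurry; fun_prop)
  exact (this.integral_prod_right (ν := μ)).measurable

lemma joint_eq (μ : Measure ℝ) [IsProbabilityMeasure μ] :
    jointLaw μ = (μ.prod volume).withDensity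
      (fun z => ENNReal.ofReal (gaussianPDFReal 0 1 (z.2 - z.1))) := by
  refine Measure.ext_of_lintegral _ fun f hf => ?_
  rw [jointLaw, lintegral_map hf (by fun_prop), lintegral_prod _ (by fun_prop),
    lintegral_withDensity_eq_lintegral_mul _ (by fun_prop) hf, lintegral_prod _ (by fun_prop)]
  refine lintegral_congr fun x => ?_
  rw [gaussianReal_of_var_ne_zero _ one_ne_zero,
    lintegral_withDensity_eq_lintegral_mul _ (by fun_prop) (by fun_prop),
    ← lintegral_add_left_eq_self (μ := volume) (fun y => ((fun z : ℝ × ℝ =>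
      ENNReal.ofReal (gaussianPDFReal 0 1 (z.2 - z.1))) * f) (x, y)) x]
  refine lintegral_congr fun z => ?_
  simp [gaussianPDF]

lemma joint_fst (μ : Measure ℝ) [IsProbabilityMeasure μ] : (jointLaw μ).fst = μ := by
  rw [jointLaw, Measure.fst, Measure.map_map (by fun_prop) (by fun_prop)]
  exact Measure.fst_prod

lemma joint_snd (μ : Measure ℝ) [IsProbabilityMeasure μ] :
    (jointLaw μ).snd = volume.withDensity (fun y => ENNReal.ofReal (outDens μ y)) := by
  refine Measure.ext_of_lintegral _ fun f hf => ?_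
  have hm := outDens_meas μ
  rw [Measure.snd, lintegral_map hf (by fun_prop), joint_eq,
    lintegral_withDensity_eq_lintegral_mul _ (by fun_prop) (by fun_prop),
    lintegral_withDensity_eq_lintegral_mul _ (by fun_prop) (by fun_prop),
    lintegral_prod_symm _ (by fun_prop)]
  refine lintegral_congr fun y => ?_
  simp only [Pi.mul_apply]
  rw [lintegral_mul_const _ (by fun_prop), outDens,
    ofReal_integral_eq_lintegral_ofReal (gauss1_int μ y)
      (ae_of_all _ fun x => gaussianPDFReal_nonneg _ _ _)]

lemma gauss1_lower {A : ℝ} {x y : ℝ} (hx : |x| ≤ A) :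
    gaussianPDFReal 0 1 (|y| + A) ≤ gaussianPDFReal 0 1 (y - x) := by
  have hs : (y - x) ^ 2 ≤ (|y| + A) ^ 2 := by
    rw [sq_le_sq]
    refine (abs_sub y x).trans ?_
    rw [abs_of_nonneg (add_nonneg (abs_nonneg y) ((abs_nonneg x).trans hx))]; linarith
  simp only [gaussianPDFReal, NNReal.coe_one, sub_zero, mul_one]
  gcongr

lemma gauss1_upper {A : ℝ} {x y : ℝ} (hx : |x| ≤ A) (hy : A ≤ y) :
    gaussianPDFReal 0 1 (y - x) ≤ gaussianPDFReal 0 1 (y - A) := by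
  have hs : (y - A) ^ 2 ≤ (y - x) ^ 2 := by
    have := (abs_le.1 hx).2
    nlinarith
  simp only [gaussianPDFReal, NNReal.coe_one, sub_zero, mul_one]
  gcongr

lemma ae_bd {μ : Measure ℝ} {A : ℝ} (h : μ {x | A < |x|} = 0) : ∀ᵐ x ∂μ, |x| ≤ A := by
  rw [ae_iff]; simpa using h

lemma outDens_lower (μ : Measure ℝ) [IsProbabilityMeasure μ] {A : ℝ} (h : μ {x | A < |x|} = 0)
    (y : ℝ) : gaussianPDFReal 0 1 (|y| + A) ≤ outDens μ y := by
  have := integral_mono_ae (μ := μ) (integrable_const (gaussianPDFReal 0 1 (|y| + A)))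
    (gauss1_int μ y) ((ae_bd h).mono fun x hx => gauss1_lower hx)
  simpa [outDens] using this

lemma outDens_upper (μ : Measure ℝ) [IsProbabilityMeasure μ] {A : ℝ} (h : μ {x | A < |x|} = 0)
    {y : ℝ} (hy : A ≤ y) : outDens μ y ≤ gaussianPDFReal 0 1 (y - A) := by
  have := integral_mono_ae (μ := μ) (gauss1_int μ y) 
    (integrable_const (gaussianPDFReal 0 1 (y - A)))
    ((ae_bd h).mono fun x hx => gauss1_upper hx hy)
  simpa [outDens] using this

lemma outDens_le_one (μ : Measure ℝ) [IsProbabilityMeasure μ] (y : ℝ) : outDens μ y ≤ 1 := by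
  have := integral_mono_ae (μ := μ) (gauss1_int μ y) 
    (integrable_const 1) (ae_of_all _ fun x => gauss1_le (y - x))
  simpa [outDens] using this

lemma outDens_pos (μ : Measure ℝ) [IsProbabilityMeasure μ] {A : ℝ} (h : μ {x | A < |x|} = 0)
    (y : ℝ) : 0 < outDens μ y :=
  (gaussianPDFReal_pos _ _ _ one_ne_zero).trans_le (outDens_lower μ h y)

lemma joint_eq' (μ : Measure ℝ) [IsProbabilityMeasure μ] {A : ℝ} (h : μ {x | A < |x|} = 0) :
    jointLaw μ = ((jointLaw μ).fst.prod (jointLaw μ).snd).withDensity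
      (fun z => ENNReal.ofReal (gaussianPDFReal 0 1 (z.2 - z.1) / outDens μ z.2)) := by
  have hm := outDens_meas μ
  conv_lhs => rw [joint_eq]
  rw [joint_fst, joint_snd, prod_withDensity_right (by fun_prop), ← withDensity_mul _ (by fun_prop) (by fun_prop)]
  congr 1
  ext z
  simp only [Pi.mul_apply]
  rw [← ENNReal.ofReal_mul (outDens_pos μ h _).le, mul_div_cancel₀ _ (outDens_pos μ h _).ne']

instance joint_prob (μ : Measure ℝ) [IsProbabilityMeasure μ] : IsProbabilityMeasure (jointLaw μ) := 
  Measure.isProbabilityMeasure_map (by fun_prop)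

lemma joint_ac (μ : Measure ℝ) [IsProbabilityMeasure μ] {A : ℝ} (h : μ {x | A < |x|} = 0) :
    jointLaw μ ≪ (jointLaw μ).fst.prod (jointLaw μ).snd := by
  conv_lhs => rw [joint_eq' μ h]
  exact withDensity_absolutelyContinuous _ _

lemma llr_eq (μ : Measure ℝ) [IsProbabilityMeasure μ] {A : ℝ} (h : μ {x | A < |x|} = 0) :
    llr (jointLaw μ) ((jointLaw μ).fst.prod (jointLaw μ).snd) =ᵐ[jointLaw μ]
      fun z => Real.log (gaussianPDFReal 0 1 (z.2 - z.1)) - Real.log (outDens μ z.2) := by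
  have hm := outDens_meas μ
  have h1 := Measure.rnDeriv_withDensity ((jointLaw μ).fst.prod (jointLaw μ).snd)
    (f := fun z => ENNReal.ofReal (gaussianPDFReal 0 1 (z.2 - z.1) / outDens μ z.2)) (by fun_prop)
  rw [← joint_eq' μ h] at h1
  filter_upwards [(joint_ac μ h).ae_le h1] with z hz
  have h2 := gaussianPDFReal_pos 0 1 (z.2 - z.1) one_ne_zero
  have h3 := outDens_pos μ h z.2
  rw [llr, hz, ENNReal.toReal_ofReal (by positivity), Real.log_div h2.ne' h3.ne']

lemma gauss_sq_int : Integrable (fun z : ℝ => z ^ 2) (gaussianReal 0 1) :=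
  (memLp_id_gaussianReal (μ := 0) (v := 1) 2).integrable_sq

lemma gauss_id_int : Integrable (fun z : ℝ => z) (gaussianReal 0 1) :=
  (memLp_id_gaussianReal (μ := 0) (v := 1) 1).integrable (by simp)

lemma gauss_sq_val : ∫ z : ℝ, z ^ 2 ∂(gaussianReal 0 1) = 1 := by
  have h := variance_fun_id_gaussianReal (μ := 0) (v := 1)
  rw [variance_eq_integral (by fun_prop)] at h
  simpa using h

lemma joint_noise (μ : Measure ℝ) [IsProbabilityMeasure μ] :
    Integrable (fun z : ℝ × ℝ => (z.2 - z.1) ^ 2) (jointLaw μ) ∧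
      ∫ z : ℝ × ℝ, (z.2 - z.1) ^ 2 ∂(jointLaw μ) = 1 := by
  constructor
  · rw [jointLaw, integrable_map_measure (by fun_prop) (by fun_prop)]
    have := gauss_sq_int.comp_snd μ
    simpa [Function.comp_def] using this
  · rw [jointLaw, integral_map (by fun_prop) (by fun_prop)]
    have := integral_fun_snd (μ := μ) (ν := gaussianReal 0 1) (fun z : ℝ => z ^ 2)
    simpa [gauss_sq_val] using this

lemma joint_out (μ : Measure ℝ) [IsProbabilityMeasure μ] {A : ℝ} (h : μ {x | A < |x|} = 0) :
    Integrable (fun z : ℝ × ℝ => z.2 ^ 2) (jointLaw μ) ∧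
      ∫ z : ℝ × ℝ, z.2 ^ 2 ∂(jointLaw μ) = ∫ x, x ^ 2 ∂μ + 1 := by
  have hx : Integrable (fun x : ℝ => x) μ :=
    Integrable.of_bound (C := A) (by fun_prop) (ae_bd h)
  have hx2 : Integrable (fun x : ℝ => x ^ 2) μ := by
    refine Integrable.of_bound (C := A ^ 2) (by fun_prop) ((ae_bd h).mono fun x hx => ?_)
    rw [norm_pow]; gcongr; exact hx
  have i1 : Integrable (fun z : ℝ × ℝ => z.1 ^ 2) (μ.prod (gaussianReal 0 1)) :=
    hx2.comp_fst _
  have i2 : Integrable (fun z : ℝ × ℝ => z.2 ^ 2) (μ.prod (gaussianReal 0 1)) :=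
    gauss_sq_int.comp_snd _
  have i3 : Integrable (fun z : ℝ × ℝ => 2 * (z.1 * z.2)) (μ.prod (gaussianReal 0 1)) :=
    (hx.mul_prod gauss_id_int).const_mul 2
  have i13 : Integrable (fun z : ℝ × ℝ => z.1 ^ 2 + 2 * (z.1 * z.2))
      (μ.prod (gaussianReal 0 1)) := i1.add i3
  have e : (fun z : ℝ × ℝ => (z.1 + z.2) ^ 2) =
      fun z => z.1 ^ 2 + 2 * (z.1 * z.2) + z.2 ^ 2 := by ext z; ring
  constructor
  · rw [jointLaw, integrable_map_measure (by fun_prop) (by fun_prop)]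
    simp only [Function.comp_def]
    rw [e]
    exact (i1.add i3).add i2
  · rw [jointLaw, integral_map (by fun_prop) (by fun_prop)]
    simp only
    rw [e, integral_add i13 i2, integral_add i1 i3, integral_const_mul,
      integral_prod_mul (fun x : ℝ => x) (fun x : ℝ => x),
      integral_fun_snd (μ := μ) (ν := gaussianReal 0 1) (fun z : ℝ => z ^ 2),
      integral_fun_fst (μ := μ) (ν := gaussianReal 0 1) (fun z : ℝ => z ^ 2), gauss_sq_val,
      integral_id_gaussianReal]
    simp

lemma log_gauss (v : NNReal) (hv : v ≠ 0) (y : ℝ) : Real.log (gaussianPDFReal 0 v y) =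
    -(1 / 2) * Real.log (2 * Real.pi) - (1 / 2) * Real.log v - (2 * (v : ℝ))⁻¹ * y ^ 2 := by
  have hv' : (0 : ℝ) < v := by positivity
  rw [gaussianPDFReal, Real.log_mul (by positivity) (Real.exp_pos _).ne', Real.log_exp,
    Real.log_inv, Real.log_sqrt (by positivity), Real.log_mul (by positivity) (by positivity)]
  field_simp
  ring

lemma log_out_int (μ : Measure ℝ) [IsProbabilityMeasure μ] {A : ℝ} (h : μ {x | A < |x|} = 0) :
    Integrable (fun z : ℝ × ℝ => Real.log (outDens μ z.2)) (jointLaw μ) := by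
  have hm := outDens_meas μ
  have hb : Integrable (fun z : ℝ × ℝ =>
      ((1 / 2) * Real.log (2 * Real.pi) + A ^ 2) + z.2 ^ 2) (jointLaw μ) :=
    (integrable_const _).add (joint_out μ h).1
  refine hb.mono' (Measurable.aestronglyMeasurable (by fun_prop)) (ae_of_all _ fun z => ?_)
  have h1 := outDens_lower μ h z.2
  have h2 := Real.log_le_log (gaussianPDFReal_pos 0 1 _ one_ne_zero) h1
  rw [log_gauss 1 one_ne_zero] at h2
  have h3 : Real.log (outDens μ z.2) ≤ 0 :=
    Real.log_nonpos (outDens_pos μ h _).le (outDens_le_one μ _)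
  rw [Real.norm_of_nonpos h3]
  simp only [NNReal.coe_one, Real.log_one] at h2
  nlinarith [sq_nonneg (|z.2| - A), sq_abs z.2]

lemma key_point {p q : ℝ} (hp : 0 < p) (hq : 0 < q) : -Real.log p ≤ -Real.log q - 1 + q / p := by
  have := Real.log_le_sub_one_of_pos (div_pos hq hp)
  rw [Real.log_div hq.ne' hp.ne'] at this
  linarith

lemma key_point' {p q : ℝ} (hp : 0 < p) (hq : 0 < q) (hpq : p ≤ q / 4) :
    -Real.log p ≤ -Real.log q - 1 + (q - q / 4) / p := by
  have h1 := key_point hp (half_pos hq)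
  rw [Real.log_div hq.ne' two_ne_zero] at h1
  have h2 : Real.log 2 ≤ 1 := by linarith [Real.log_two_lt_d9]
  have h3 : 1 ≤ (q / 4) / p := by rw [one_le_div hp]; exact hpq
  have h4 : (q - q / 4) / p = q / 2 / p + (q / 4) / p := by field_simp; ring
  linarith

lemma main_bound (μ : Measure ℝ) [IsProbabilityMeasure μ] {A P : ℝ} (hP : 0 < P)
    (h : μ {x | A < |x|} = 0) (h2 : ∫ x, x ^ 2 ∂μ ≤ P) (v : NNReal) (hv : (v : ℝ) = 1 + P)
    (T : Set ℝ) (hT : MeasurableSet T)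
    (hq : ∀ y ∈ T, outDens μ y ≤ gaussianPDFReal 0 v y / 4) :
    mutInfo μ ≤ (((1 / 2) * Real.log (1 + P)
      - (1 / 4) * ∫ y in T, gaussianPDFReal 0 v y : ℝ) : EReal) := by
  have hv0 : v ≠ 0 := by rintro rfl; simp at hv; linarith
  have hm := outDens_meas μ
  obtain ⟨in1, in2⟩ := joint_noise μ
  obtain ⟨io1, io2⟩ := joint_out μ h
  have hlog := log_out_int μ h
  have hlg : Integrable (fun z : ℝ × ℝ => Real.log (gaussianPDFReal 0 1 (z.2 - z.1)))
      (jointLaw μ) := by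
    simp_rw [log_gauss 1 one_ne_zero]
    exact (integrable_const _).sub (in1.const_mul _)
  have hint : Integrable (fun z : ℝ × ℝ => Real.log (gaussianPDFReal 0 1 (z.2 - z.1))
      - Real.log (outDens μ z.2)) (jointLaw μ) := hlg.sub hlog
  have hll := llr_eq μ h
  rw [mutInfo, klDiv, if_pos ⟨joint_ac μ h, hint.congr hll.symm⟩, integral_congr_ae hll,
    EReal.coe_le_coe_iff]
  set q := gaussianPDFReal 0 v with hqdef
  have hqpos : ∀ y, 0 < q y := fun y => gaussianPDFReal_pos 0 v y hv0
  have hqm : Measurable q := measurable_gaussianPDFReal 0 v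
  have hqi : Integrable q := integrable_gaussianPDFReal 0 v
  -- tilted density
  let r : ℝ → ℝ := fun y => q y - T.indicator (fun y => q y / 4) y
  have hrm : Measurable r := hqm.sub ((hqm.div_const 4).indicator hT)
  have hri : Integrable r := hqi.sub ((hqi.div_const 4).indicator hT)
  have hrI : ∫ y, r y = 1 - (1 / 4) * ∫ y in T, q y := by
    simp only [r]
    rw [integral_sub hqi ((hqi.div_const 4).indicator hT), integral_indicator hT,
      integral_div, integral_gaussianPDFReal_eq_one 0 hv0]
    ring
  have hlt : ∀ᵐ y ∂(volume : Measure ℝ), ENNReal.ofReal (outDens μ y) < ⊤ :=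
    ae_of_all _ fun y => ENNReal.ofReal_lt_top
  have hcan : ∀ y, (ENNReal.ofReal (outDens μ y)).toReal • (r y / outDens μ y) = r y := by
    intro y
    have := outDens_pos μ h y
    rw [ENNReal.toReal_ofReal this.le, smul_eq_mul]
    field_simp
  have hsi : Integrable (fun y => r y / outDens μ y) (jointLaw μ).snd := by
    rw [joint_snd, integrable_withDensity_iff_integrable_smul' (by fun_prop) hlt]
    simpa only [hcan] using hri
  have hsI : ∫ y, r y / outDens μ y ∂(jointLaw μ).snd = ∫ y, r y := by
    rw [joint_snd, integral_withDensity_eq_integral_toReal_smul (by fun_prop) hlt]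
    simp only [hcan]
  have hJi : Integrable (fun z : ℝ × ℝ => r z.2 / outDens μ z.2) (jointLaw μ) := by
    rw [Measure.snd, integrable_map_measure (Measurable.aestronglyMeasurable (by fun_prop))
      (by fun_prop)] at hsi
    exact hsi
  have hJI : ∫ z : ℝ × ℝ, r z.2 / outDens μ z.2 ∂(jointLaw μ) = ∫ y, r y := by
    rw [← hsI, Measure.snd, integral_map (by fun_prop)
      (Measurable.aestronglyMeasurable (by fun_prop))]
  have hpt : ∀ z : ℝ × ℝ, Real.log (gaussianPDFReal 0 1 (z.2 - z.1)) - Real.log (outDens μ z.2) ≤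
      ((1 / 2) * Real.log (1 + P) - 1) + (2 * (v : ℝ))⁻¹ * z.2 ^ 2
        - (1 / 2) * (z.2 - z.1) ^ 2 + r z.2 / outDens μ z.2 := by
    intro z
    have a1 : -Real.log (outDens μ z.2) ≤ -Real.log (q z.2) - 1 + r z.2 / outDens μ z.2 := by
      by_cases hz : z.2 ∈ T
      · simp only [r, Set.indicator_of_mem hz]
        exact key_point' (outDens_pos μ h _) (hqpos _) (hq _ hz)
      · simp only [r, Set.indicator_of_notMem hz, sub_zero]
        exact key_point (outDens_pos μ h _) (hqpos _)
    rw [hqdef, log_gauss v hv0, hv] at a1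
    rw [log_gauss 1 one_ne_zero, hv]
    simp only [NNReal.coe_one, Real.log_one]
    linarith
  have i1 : Integrable (fun z : ℝ × ℝ => ((1 / 2) * Real.log (1 + P) - 1)
      + (2 * (v : ℝ))⁻¹ * z.2 ^ 2) (jointLaw μ) := (integrable_const _).add (io1.const_mul _)
  have i2 : Integrable (fun z : ℝ × ℝ => ((1 / 2) * Real.log (1 + P) - 1)
      + (2 * (v : ℝ))⁻¹ * z.2 ^ 2 - (1 / 2) * (z.2 - z.1) ^ 2) (jointLaw μ) :=
    i1.sub (in1.const_mul _)
  refine (integral_mono hint (i2.add hJi) hpt).trans ?_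
  simp only [Pi.add_apply]
  rw [integral_add i2 hJi, integral_sub i1 (in1.const_mul _),
    integral_add (integrable_const _) (io1.const_mul _), integral_const_mul, integral_const_mul,
    in2, io2, hJI, hrI, hv]
  have : (2 * (1 + P))⁻¹ * (∫ x, x ^ 2 ∂μ + 1) ≤ 1 / 2 := by
    rw [inv_mul_le_iff₀ (by positivity)]; linarith
  rw [integral_const, probReal_univ, one_smul]
  linarith

lemma tail_point {s A y : ℝ} (hs : 1 < s) (hA0 : 0 < A) (hA : s * Real.log (4 * s) ≤ A)
    (hy : A * s / (s - 1) + 1 ≤ y) (v : NNReal) (hv : (v : ℝ) = s ^ 2) :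
    gaussianPDFReal 0 1 (y - A) ≤ gaussianPDFReal 0 v y / 4 := by
  have hs1 : 0 < s - 1 := by linarith
  obtain ⟨t, ht⟩ : ∃ t, y = A * s / (s - 1) + t := ⟨y - A * s / (s - 1), by ring⟩
  have ht1 : 1 ≤ t := by linarith
  have e1 : y - A = A / (s - 1) + t := by rw [ht]; field_simp; ring
  have e2 : y / s = A / (s - 1) + t / s := by rw [ht]; field_simp
  have hl : Real.log (4 * s) ≤ A / s := by rw [le_div_iff₀ (by linarith)]; linarith
  have hexp : -(y - A) ^ 2 / 2 ≤ -(y / s) ^ 2 / 2 - Real.log (4 * s) := by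
    rw [e1, e2]
    have b1 : (A / (s - 1) + t) ^ 2 - (A / (s - 1) + t / s) ^ 2
        = 2 * (A / s) * t + (t ^ 2 - (t / s) ^ 2) := by field_simp; ring
    have b2 : (t / s) ^ 2 ≤ t ^ 2 := by
      have : t / s ≤ t := div_le_self (by linarith) hs.le
      have : 0 ≤ t / s := by positivity
      gcongr
    have b3 : A / s ≤ A / s * t := le_mul_of_one_le_right (by positivity) ht1
    linarith
  have hE := Real.exp_le_exp.2 hexp
  rw [Real.exp_sub, Real.exp_log (by positivity)] at hE
  have hq : gaussianPDFReal 0 v y =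
      (Real.sqrt (2 * Real.pi))⁻¹ * (Real.exp (-(y / s) ^ 2 / 2) / s) := by
    rw [gaussianPDFReal, hv, Real.sqrt_mul (by positivity), Real.sqrt_sq (by linarith), mul_inv]
    have : -(y - 0) ^ 2 / (2 * s ^ 2) = -(y / s) ^ 2 / 2 := by field_simp; ring
    rw [this]; field_simp
  have hp : gaussianPDFReal 0 1 (y - A) =
      (Real.sqrt (2 * Real.pi))⁻¹ * Real.exp (-(y - A) ^ 2 / 2) := by
    simp [gaussianPDFReal]
  rw [hp, hq, mul_div_assoc]
  refine mul_le_mul_of_nonneg_left (hE.trans_eq ?_) (by positivity)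
  field_simp

lemma tail_mass {s A : ℝ} (hs : 1 < s) (hA0 : 0 < A) (v : NNReal) (hv : (v : ℝ) = s ^ 2) :
    (Real.sqrt (2 * Real.pi * s ^ 2))⁻¹ * Real.exp (-4) * Real.exp (-(A ^ 2) / (s - 1) ^ 2) ≤
      ∫ y in Set.Icc (A * s / (s - 1) + 1) (A * s / (s - 1) + 2), gaussianPDFReal 0 v y := by
  have hs1 : 0 < s - 1 := by linarith
  set a := A * s / (s - 1) with ha
  have ha0 : 0 < a := by positivity
  have hc : (∫ y in Set.Icc (a + 1) (a + 2), ((Real.sqrt (2 * Real.pi * s ^ 2))⁻¹ *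
      Real.exp (-4) * Real.exp (-(A ^ 2) / (s - 1) ^ 2) : ℝ)) =
      (Real.sqrt (2 * Real.pi * s ^ 2))⁻¹ * Real.exp (-4) * Real.exp (-(A ^ 2) / (s - 1) ^ 2) := by
    rw [setIntegral_const, Measure.real, Real.volume_Icc]
    norm_num
  rw [← hc]
  refine setIntegral_mono_on (integrableOn_const (by simp [Real.volume_Icc])) (integrable_gaussianPDFReal 0 v).integrableOn
    measurableSet_Icc fun y hy => ?_
  rw [gaussianPDFReal, hv, mul_assoc, ← Real.exp_add]
  gcongr
  have hy2 : y ^ 2 ≤ (a + 2) ^ 2 := by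
    have := hy.1; have := hy.2
    gcongr; linarith
  have e : a = s * (A / (s - 1)) := by rw [ha]; ring
  have e3 : -A ^ 2 / (s - 1) ^ 2 = -(A / (s - 1)) ^ 2 := by rw [div_pow, neg_div]
  rw [sub_zero, neg_div (2 * s ^ 2), e3]
  have : y ^ 2 / (2 * s ^ 2) ≤ 4 + (A / (s - 1)) ^ 2 := by
    rw [div_le_iff₀ (by positivity)]
    have hh : (4 + (A / (s - 1)) ^ 2) * (2 * s ^ 2) = 8 * s ^ 2 + 2 * a ^ 2 := by rw [e]; ring
    rw [hh]
    nlinarith [sq_nonneg (a - 2)]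
  linarith

/-- For fixed `P > 0` there are `c > 0` and `A₀ > 0` such that for all
`A ≥ A₀` the gap between the unconstrained AWGN capacity `(1/2)ln(1+P)` and the
amplitude-constrained capacity `C(A,P)` is at least `c · A⁻² · exp(-A²/(√(1+P)-1)²)`. -/
theorem smith_capacity_gap_lower
    (P : ℝ) (hP : 0 < P) :
    ∃ c > (0 : ℝ), ∃ A₀ > (0 : ℝ), ∀ A : ℝ, A₀ ≤ A →
      ((c * (A ^ 2)⁻¹ * Real.exp (-(A ^ 2) / (Real.sqrt (1 + P) - 1) ^ 2) : ℝ) : EReal) ≤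
        (((1 / 2) * Real.log (1 + P) : ℝ) : EReal) - CAP A P := by
  set s := Real.sqrt (1 + P) with hs
  have hs2 : s ^ 2 = 1 + P := Real.sq_sqrt (by linarith)
  have hs1 : 1 < s := by rw [hs, Real.lt_sqrt (by norm_num)]; linarith
  refine ⟨(1 / 4) * ((Real.sqrt (2 * Real.pi * s ^ 2))⁻¹ * Real.exp (-4)), by positivity,
    max 1 (s * Real.log (4 * s)), by positivity, fun A hA => ?_⟩
  have hA1 : 1 ≤ A := (le_max_left _ _).trans hA
  have hA2 : s * Real.log (4 * s) ≤ A := (le_max_right _ _).trans hA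
  have hv : ((⟨1 + P, by linarith⟩ : NNReal) : ℝ) = 1 + P := rfl
  generalize (⟨1 + P, by linarith⟩ : NNReal) = v at hv
  have hmass := tail_mass hs1 (by linarith : 0 < A) v (hv.trans hs2.symm)
  set M := ∫ y in Set.Icc (A * s / (s - 1) + 1) (A * s / (s - 1) + 2), gaussianPDFReal 0 v y
  have hcap : CAP A P ≤ (((1 / 2) * Real.log (1 + P) - (1 / 4) * M : ℝ) : EReal) := by
    refine iSup₂_le fun μ hμ => ?_
    obtain ⟨h1, h2, h3⟩ := hμ
    refine main_bound μ hP h2 h3 v hv _ measurableSet_Icc fun y hy => ?_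
    have hyA : A ≤ y := by
      have : A ≤ A * s / (s - 1) := by
        rw [le_div_iff₀ (by linarith)]; nlinarith
      linarith [hy.1]
    exact (outDens_upper μ h2 hyA).trans
      (tail_point hs1 (by linarith) hA2 hy.1 v (hv.trans hs2.symm))
  refine le_trans ?_ (EReal.sub_le_sub le_rfl hcap)
  rw [← EReal.coe_sub, EReal.coe_le_coe_iff]
  have hA3 : (A ^ 2)⁻¹ ≤ 1 := inv_le_one_of_one_le₀ (one_le_pow₀ hA1)
  have : 1 / 4 * ((Real.sqrt (2 * Real.pi * s ^ 2))⁻¹ * Real.exp (-4)) * (A ^ 2)⁻¹ *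
      Real.exp (-(A ^ 2) / (s - 1) ^ 2) ≤ 1 / 4 * ((Real.sqrt (2 * Real.pi * s ^ 2))⁻¹ *
      Real.exp (-4)) * 1 * Real.exp (-(A ^ 2) / (s - 1) ^ 2) := by gcongr
  linarith
end

section
/- Fix P > 0. There exist constants c > 0, K > 0 and A₀ > 0 such that for all A ≥ A₀, the gap between the unconstrained AWGN capacity and the amplitude-constrained capacity satisfies (1/2) ln(1+P) − C(A,P) ≤ c · A^{K} · exp( −A² / (2P) ). -/
open MeasureTheory ProbabilityTheory

open scoped NNReal ENNReal

lemma aux_sq_int (m : ℝ) (v : ℝ≥0) : Integrable (fun x : ℝ => x ^ 2) (gaussianReal m v) :=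
  (memLp_id_gaussianReal 2).integrable_sq

lemma aux_id_int (m : ℝ) (v : ℝ≥0) : Integrable (fun x : ℝ => x) (gaussianReal m v) :=
  (memLp_id_gaussianReal 1).integrable (by norm_num)

lemma aux_sq (v : ℝ≥0) : ∫ x, x ^ 2 ∂(gaussianReal 0 v) = v := by
  have h := variance_fun_id_gaussianReal (μ := 0) (v := v)
  rw [variance_eq_integral (by fun_prop)] at h
  simpa using h

noncomputable def auxR (v : ℝ≥0) (p : ℝ × ℝ) : ℝ≥0∞ :=
  gaussianPDF 0 1 (p.2 - p.1) / gaussianPDF 0 (v + 1) p.2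

lemma auxR_meas (v : ℝ≥0) : Measurable (auxR v) := by
  unfold auxR
  exact ((measurable_gaussianPDF 0 1).comp (measurable_snd.sub measurable_fst)).div
    ((measurable_gaussianPDF 0 (v + 1)).comp measurable_snd)

lemma aux_joint (μ : Measure ℝ) [IsProbabilityMeasure μ] (v : ℝ≥0) :
    jointLaw μ = (μ.prod (gaussianReal 0 (v + 1))).withDensity (auxR v) := by
  have hm : Measurable (fun p : ℝ × ℝ => (p.1, p.1 + p.2)) := by fun_prop
  have hv : v + 1 ≠ 0 := by positivity
  ext s hs
  rw [jointLaw, Measure.map_apply hm hs, withDensity_apply _ hs, ← lintegral_indicator_one (hm hs),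
    ← lintegral_indicator hs, lintegral_prod _ (by
      exact (measurable_one.indicator (hm hs)).aemeasurable),
    lintegral_prod _ (((auxR_meas v).indicator hs).aemeasurable)]
  congr 1
  ext x
  rw [gaussianReal_of_var_ne_zero _ one_ne_zero, gaussianReal_of_var_ne_zero _ hv]
  have m1 : Measurable (fun y : ℝ => ((fun p : ℝ × ℝ => (p.1, p.1 + p.2)) ⁻¹' s).indicator
      (1 : ℝ × ℝ → ℝ≥0∞) (x, y)) :=
    (measurable_one.indicator (hm hs)).comp measurable_prodMk_left
  have m2 : Measurable (fun y : ℝ => s.indicator (auxR v) (x, y)) :=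
    ((auxR_meas v).indicator hs).comp measurable_prodMk_left
  rw [lintegral_withDensity_eq_lintegral_mul _ (measurable_gaussianPDF _ _) m1,
    lintegral_withDensity_eq_lintegral_mul _ (measurable_gaussianPDF _ _) m2]
  rw [← lintegral_sub_right_eq_self _ x]
  congr 1
  ext y
  have hiff : (x, y - x) ∈ (fun p : ℝ × ℝ => (p.1, p.1 + p.2)) ⁻¹' s ↔ (x, y) ∈ s := by
    simp
  simp only [Pi.mul_apply]
  by_cases h : (x, y) ∈ s
  · rw [Set.indicator_of_mem (hiff.2 h), Set.indicator_of_mem h, Pi.one_apply, mul_one]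
    simp only [auxR]
    rw [ENNReal.mul_div_cancel (gaussianPDF_pos _ hv _).ne' gaussianPDF_ne_top]
  · rw [Set.indicator_of_notMem (fun h' => h (hiff.1 h')), Set.indicator_of_notMem h, mul_zero,
      mul_zero]

lemma auxR_log (v : ℝ≥0) (x z : ℝ) :
    Real.log (auxR v (x, x + z)).toReal = 1 / 2 * Real.log (1 + v) - z ^ 2 / 2
      + (x + z) ^ 2 / (2 * (1 + v)) := by
  have hv : v + 1 ≠ 0 := by positivity
  have hv' : (0 : ℝ) < 1 + v := by positivity
  have hpi := Real.pi_pos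
  simp only [auxR, ENNReal.toReal_div, toReal_gaussianPDF, add_sub_cancel_left]
  rw [Real.log_div (gaussianPDFReal_pos _ _ _ one_ne_zero).ne' (gaussianPDFReal_pos _ _ _ hv).ne']
  simp only [gaussianPDFReal]
  rw [Real.log_mul (by positivity) (by positivity), Real.log_mul (by positivity) (by positivity),
    Real.log_exp, Real.log_exp, Real.log_inv, Real.log_inv, Real.log_sqrt (by positivity),
    Real.log_sqrt (by positivity)]
  push_cast
  rw [Real.log_mul (by positivity) (by positivity), Real.log_mul (x := 2 * Real.pi) (y := v + 1)
    (by positivity) (by positivity)]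
  simp only [Real.log_one, sub_zero, add_comm (v : ℝ) 1]
  field_simp
  ring

lemma aux_main (μ : Measure ℝ) [IsProbabilityMeasure μ] (v : ℝ≥0) (c : ℝ≥0∞) (hc : c ≠ ⊤)
    (hc0 : c ≠ 0)
    (hle : μ ≤ c • gaussianReal 0 v) :
    ((1 / 2 * Real.log (1 + v) - 1 / 2 + (∫ x, x ^ 2 ∂μ + 1) / (2 * (1 + v))
      - Real.log c.toReal : ℝ) : EReal) ≤ mutInfo μ := by
  have hm : Measurable (fun p : ℝ × ℝ => (p.1, p.1 + p.2)) := by fun_prop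
  have hfst : (jointLaw μ).fst = μ := by
    rw [jointLaw, Measure.fst_map_prodMk (by fun_prop)]
    simp
  have hsnd : (jointLaw μ).snd ≤ c • gaussianReal 0 (v + 1) := by
    have e : gaussianReal 0 (v + 1) = ((gaussianReal 0 v).prod (gaussianReal 0 1)).map
        (fun p : ℝ × ℝ => p.1 + p.2) := by
      have := gaussianReal_conv_gaussianReal (m₁ := 0) (m₂ := 0) (v₁ := v) (v₂ := 1)
      rw [add_zero] at this
      rw [← this]; rfl
    rw [jointLaw, Measure.snd_map_prodMk (by fun_prop), e, ← Measure.map_smul,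
      ← Measure.prod_smul_left]
    exact Measure.map_mono (Measure.prod_mono hle le_rfl) (by fun_prop)
  unfold mutInfo klDiv
  rw [hfst]
  split_ifs with h
  swap
  · exact le_top
  obtain ⟨hac, hint⟩ := h
  have : IsProbabilityMeasure (jointLaw μ) :=
    Measure.isProbabilityMeasure_map hm.aemeasurable
  set κ := μ.prod (gaussianReal 0 (v + 1)) with hk
  set Q := μ.prod (jointLaw μ).snd with hQ
  have hQκ : Q ≤ c • κ := by
    rw [hk, ← Measure.prod_smul_right]
    exact Measure.prod_mono le_rfl hsnd
  have hJκ : jointLaw μ ≪ κ := by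
    rw [aux_joint μ v]; exact withDensity_absolutelyContinuous _ _
  have h1 : (jointLaw μ).rnDeriv κ =ᵐ[κ] auxR v := by
    rw [aux_joint μ v]; exact Measure.rnDeriv_withDensity _ (auxR_meas v)
  have h2 := Measure.rnDeriv_mul_rnDeriv (κ := κ) hac
  have h3 : Q.rnDeriv κ ≤ᵐ[κ] fun _ => c := by
    refine ae_le_of_forall_setLIntegral_le_of_sigmaFinite (Q.measurable_rnDeriv κ) fun s _ _ ↦ ?_
    refine (Measure.setLIntegral_rnDeriv_le s).trans ?_
    simpa using hQκ s
  have hcr : 0 < c.toReal := ENNReal.toReal_pos hc0 hc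
  have hv : v + 1 ≠ 0 := by positivity
  have key : (fun p => Real.log (auxR v p).toReal - Real.log c.toReal) ≤ᵐ[jointLaw μ]
      llr (jointLaw μ) Q := by
    filter_upwards [hJκ h1, hJκ h2, hJκ h3] with p h1 h2 h3
    have hR : 0 < (auxR v p).toReal := by
      simp only [auxR, ENNReal.toReal_div, toReal_gaussianPDF]
      exact div_pos (gaussianPDFReal_pos _ _ _ one_ne_zero) (gaussianPDFReal_pos _ _ _ hv)
    rw [h1, Pi.mul_apply] at h2
    rw [← h2, ENNReal.toReal_mul] at hR ⊢
    have hw : 0 < ((jointLaw μ).rnDeriv Q p).toReal :=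
      pos_of_mul_pos_left hR ENNReal.toReal_nonneg
    have hq : 0 < (Q.rnDeriv κ p).toReal :=
      pos_of_mul_pos_right hR ENNReal.toReal_nonneg
    rw [llr, Real.log_mul hw.ne' hq.ne']
    have := Real.log_le_log hq (ENNReal.toReal_mono hc h3)
    linarith
  have hx2 : Integrable (fun x : ℝ => x ^ 2) μ :=
    ((aux_sq_int 0 v).smul_measure hc).mono_measure hle
  have hx1 : Integrable (fun x : ℝ => x) μ :=
    ((aux_id_int 0 v).smul_measure hc).mono_measure hle
  have i1 : Integrable (fun p : ℝ × ℝ => p.1 ^ 2) (μ.prod (gaussianReal 0 1)) := hx2.comp_fst _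
  have i2 : Integrable (fun p : ℝ × ℝ => p.2 ^ 2) (μ.prod (gaussianReal 0 1)) :=
    (aux_sq_int 0 1).comp_snd _
  have i3 : Integrable (fun p : ℝ × ℝ => p.1 * p.2) (μ.prod (gaussianReal 0 1)) :=
    hx1.mul_prod (aux_id_int 0 1)
  have e1 : ∫ p : ℝ × ℝ, p.1 ^ 2 ∂(μ.prod (gaussianReal 0 1)) = ∫ x, x ^ 2 ∂μ := by
    rw [integral_fun_fst (fun x : ℝ => x ^ 2)]; simp
  have e2 : ∫ p : ℝ × ℝ, p.2 ^ 2 ∂(μ.prod (gaussianReal 0 1)) = 1 := by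
    rw [integral_fun_snd (fun x : ℝ => x ^ 2), aux_sq]; simp
  have e3 : ∫ p : ℝ × ℝ, p.1 * p.2 ∂(μ.prod (gaussianReal 0 1)) = 0 := by
    rw [integral_prod_mul (fun x : ℝ => x) (fun x : ℝ => x), integral_id_gaussianReal, mul_zero]
  have hLm : Measurable (fun p => Real.log (auxR v p).toReal - Real.log c.toReal) :=
    ((Real.measurable_log.comp (auxR_meas v).ennreal_toReal)).sub_const _
  have hform : (fun p : ℝ × ℝ => Real.log (auxR v (p.1, p.1 + p.2)).toReal - Real.log c.toReal) =
      fun p => (1 / 2 * Real.log (1 + v) - Real.log c.toReal) + ((1 / (2 * (1 + v))) * p.1 ^ 2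
        + ((1 / (2 * (1 + v)) - 1 / 2) * p.2 ^ 2 + (1 / (1 + v)) * (p.1 * p.2))) := by
    ext p
    rw [auxR_log]
    have hv' : (0 : ℝ) < 1 + v := by positivity
    field_simp
    ring
  have j3 := (i2.const_mul (1 / (2 * (1 + (v : ℝ))) - 1 / 2)).add (i3.const_mul (1 / (1 + (v : ℝ))))
  have j2 := (i1.const_mul (1 / (2 * (1 + (v : ℝ))))).add j3
  have hLi : Integrable (fun p => Real.log (auxR v p).toReal - Real.log c.toReal) (jointLaw μ) := by
    rw [jointLaw, integrable_map_measure hLm.aestronglyMeasurable hm.aemeasurable]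
    simp only [Function.comp_def]
    rw [hform]
    exact (integrable_const _).add j2
  have hval : ∫ p, (Real.log (auxR v p).toReal - Real.log c.toReal) ∂(jointLaw μ) =
      1 / 2 * Real.log (1 + v) - 1 / 2 + (∫ x, x ^ 2 ∂μ + 1) / (2 * (1 + v))
      - Real.log c.toReal := by
    rw [jointLaw, integral_map hm.aemeasurable hLm.aestronglyMeasurable]
    rw [hform]
    refine (integral_add (integrable_const _) j2).trans ?_
    rw [integral_add' (i1.const_mul _) j3, integral_add' (i2.const_mul _) (i3.const_mul _)]
    simp only [integral_const_mul, e1, e2, e3]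
    simp only [integral_const, probReal_univ, smul_eq_mul]
    have hv' : (0 : ℝ) < 1 + v := by positivity
    field_simp
    ring
  rw [← hval]
  exact_mod_cast integral_mono_ae hLi hint key

lemma aux_pdf (v : ℝ≥0) (hv : v ≠ 0) (A t : ℝ) (x : ℝ) (hx : A ^ 2 + t ^ 2 ≤ x ^ 2) :
    gaussianPDFReal 0 v x ≤ Real.exp (-(A ^ 2) / (2 * v)) * gaussianPDFReal 0 v t := by
  have hv' : (0 : ℝ) < v := by positivity
  simp only [gaussianPDFReal, sub_zero]
  rw [mul_left_comm, ← Real.exp_add]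
  gcongr
  rw [← add_div]
  gcongr
  linarith

lemma aux_tail (v : ℝ≥0) (hv : v ≠ 0) (A : ℝ) (hA : 0 < A) :
    ∫ x in (Set.Icc (-A) A)ᶜ, x ^ 2 ∂(gaussianReal 0 v) ≤
      4 * (A ^ 2 + v) * Real.exp (-(A ^ 2) / (2 * v)) := by
  set E := Real.exp (-(A ^ 2) / (2 * v)) with hE
  have hE0 : 0 < E := Real.exp_pos _
  have hms : MeasurableSet (Set.Icc (-A) A)ᶜ := measurableSet_Icc.compl
  have g1 : Integrable (fun t => gaussianPDFReal 0 v t) := integrable_gaussianPDFReal 0 v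
  have g2 : Integrable (fun t => gaussianPDFReal 0 v t * t ^ 2) := by
    have := aux_sq_int 0 v
    rw [gaussianReal_of_var_ne_zero _ hv, integrable_withDensity_iff_integrable_smul'
      (measurable_gaussianPDF _ _) (by simp [gaussianPDF_lt_top])] at this
    simpa [toReal_gaussianPDF] using this
  have v2 : ∫ t, gaussianPDFReal 0 v t * t ^ 2 = v := by
    rw [← aux_sq v, integral_gaussianReal_eq_integral_smul hv]; rfl
  set G : ℝ → ℝ := fun t => 2 * E * A ^ 2 * gaussianPDFReal 0 v t
    + 2 * E * (gaussianPDFReal 0 v t * t ^ 2) with hG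
  have iG : Integrable G := (g1.const_mul _).add (g2.const_mul _)
  have vG : ∫ t, G t = 2 * (A ^ 2 + v) * E := by
    rw [hG, integral_add (g1.const_mul _) (g2.const_mul _), integral_const_mul, integral_const_mul,
      v2, integral_gaussianPDFReal_eq_one _ hv]
    ring
  have G0 : ∀ t, 0 ≤ G t := fun t => by
    have := gaussianPDFReal_nonneg 0 v t
    simp only [hG]; positivity
  have hGb : ∀ x t, A ^ 2 + t ^ 2 ≤ x ^ 2 → x ^ 2 ≤ 2 * (A ^ 2 + t ^ 2) →
      gaussianPDFReal 0 v x * x ^ 2 ≤ G t := by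
    intro x t h1 h2
    have := gaussianPDFReal_nonneg 0 v t
    calc gaussianPDFReal 0 v x * x ^ 2 ≤ (E * gaussianPDFReal 0 v t) * (2 * (A ^ 2 + t ^ 2)) := by
          gcongr
          exact aux_pdf v hv A t x h1
      _ = G t := by simp only [hG]; ring
  rw [← integral_indicator hms, integral_gaussianReal_eq_integral_smul hv]
  calc _ ≤ ∫ x, (G (x - A) + G (x + A)) := by
        refine integral_mono_of_nonneg (.of_forall fun x => ?_)
          ((iG.comp_sub_right A).add (iG.comp_add_right A)) (.of_forall fun x => ?_)
        · have := gaussianPDFReal_nonneg 0 v x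
          simp only [Set.indicator, smul_eq_mul, Pi.zero_apply]
          split_ifs <;> positivity
        · have a1 := G0 (x - A)
          have a2 := G0 (x + A)
          by_cases hx : x ∈ (Set.Icc (-A) A)ᶜ
          · simp only [Set.indicator_of_mem hx, smul_eq_mul]
            by_cases h : x ≤ A
            · have h' : x < -A := by
                by_contra h'
                exact hx ⟨not_lt.1 h', h⟩
              have := hGb x (x + A) (by nlinarith) (by nlinarith [sq_nonneg (x + 2 * A)])
              linarith
            · have := hGb x (x - A) (by nlinarith) (by nlinarith [sq_nonneg (x - 2 * A)])
              linarith
          · simp only [Set.indicator_of_notMem hx, smul_zero]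
            linarith
    _ = 4 * (A ^ 2 + v) * E := by
        rw [integral_add (iG.comp_sub_right A) (iG.comp_add_right A),
          integral_sub_right_eq_self, integral_add_right_eq_self, vG]
        ring

/-- For fixed `P > 0` there are `c > 0`, `K > 0` and `A₀ > 0` such that for
all `A ≥ A₀` the gap between the unconstrained AWGN capacity `(1/2)ln(1+P)` and the
amplitude-constrained capacity `C(A,P)` is at most `c · A^K · exp(-A²/(2P))`. -/
theorem smith_capacity_gap_upper
    (P : ℝ) (hP : 0 < P) :
    ∃ c > (0 : ℝ), ∃ K > (0 : ℝ), ∃ A₀ > (0 : ℝ), ∀ A : ℝ, A₀ ≤ A →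
      (((1 / 2) * Real.log (1 + P) : ℝ) : EReal) - CAP A P ≤
        ((c * A ^ K * Real.exp (-(A ^ 2) / (2 * P)) : ℝ) : EReal) := by
  set v : ℝ≥0 := ⟨P, hP.le⟩ with hvdef
  have hvP : (v : ℝ) = P := rfl
  have hv : v ≠ 0 := by
    intro h; rw [h] at hvP; simp at hvP; linarith
  refine ⟨12 * (1 + P), by positivity, 2, by norm_num, 1 + 2 * P, by positivity, fun A hA => ?_⟩
  have hA1 : 1 ≤ A := by linarith
  have hA0 : 0 < A := by linarith
  set γ := gaussianReal 0 v with hγ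
  set S := Set.Icc (-A) A with hS
  have hSm : MeasurableSet S := measurableSet_Icc
  set T := ∫ x in Sᶜ, x ^ 2 ∂γ with hT
  have hTb : T ≤ 4 * (A ^ 2 + P) * Real.exp (-(A ^ 2) / (2 * P)) := by
    have := aux_tail v hv A hA0
    rwa [hvP] at this
  have hsqi : Integrable (fun x : ℝ => x ^ 2) γ := aux_sq_int 0 v
  have hsplit : ∫ x in S, x ^ 2 ∂γ + T = P := by
    rw [hT, integral_add_compl hSm hsqi, aux_sq, hvP]
  have hS0 : 0 ≤ ∫ x in S, x ^ 2 ∂γ := integral_nonneg fun x => sq_nonneg x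
  have hδT : A ^ 2 * γ.real Sᶜ ≤ T := by
    have : ∫ x in Sᶜ, A ^ 2 ∂γ ≤ T := by
      refine setIntegral_mono_on (integrable_const _) hsqi.integrableOn hSm.compl fun x hx => ?_
      by_contra h
      exact hx (abs_le.1 (abs_le_of_sq_le_sq (not_le.1 h).le hA0.le))
    simpa [mul_comm] using this
  have hsum : γ.real S + γ.real Sᶜ = 1 := by
    rw [measureReal_add_measureReal_compl hSm]; simp
  have hd0 : 0 ≤ γ.real Sᶜ := measureReal_nonneg
  have hd1 : γ.real Sᶜ ≤ 1 / 2 := by nlinarith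
  have hd2 : γ.real Sᶜ ≤ T := by
    have : 1 ≤ A ^ 2 := one_le_pow₀ hA1
    nlinarith
  have hp0 : 1 / 2 ≤ γ.real S := by linarith
  have hγS : γ S ≠ 0 := by
    intro h
    rw [measureReal_def, h] at hp0
    norm_num at hp0
  have hγt : γ S ≠ ⊤ := measure_ne_top _ _
  set μ := (γ S)⁻¹ • γ.restrict S with hμ
  have : IsProbabilityMeasure μ := ⟨by simp [hμ, ENNReal.inv_mul_cancel hγS hγt]⟩
  have hle : μ ≤ (γ S)⁻¹ • γ := by
    rw [hμ]; gcongr; exact Measure.restrict_le_self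
  have hsec : ∫ x, x ^ 2 ∂μ = (γ.real S)⁻¹ * ∫ x in S, x ^ 2 ∂γ := by
    rw [hμ, integral_smul_measure, ENNReal.toReal_inv]; rfl
  have hin : ∫ x in S, x ^ 2 ∂γ ≤ A ^ 2 * γ.real S := by
    have : ∫ x in S, x ^ 2 ∂γ ≤ ∫ x in S, A ^ 2 ∂γ := by
      refine setIntegral_mono_on hsqi.integrableOn (integrable_const _) hSm fun x hx => ?_
      exact sq_le_sq' hx.1 hx.2
    simpa [mul_comm] using this
  have hpp : 0 < γ.real S := by linarith
  have hup : ∫ x, x ^ 2 ∂μ ≤ P := by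
    rw [hsec, inv_mul_le_iff₀ hpp]
    nlinarith
  have hlow : P - T ≤ ∫ x, x ^ 2 ∂μ := by
    have : 1 ≤ (γ.real S)⁻¹ := (one_le_inv₀ hpp).2 (by linarith)
    rw [hsec]
    nlinarith
  have hmain := aux_main μ v (γ S)⁻¹ (ENNReal.inv_ne_top.2 hγS) (ENNReal.inv_ne_zero.2 hγt) hle
  have hcap : mutInfo μ ≤ CAP A P := by
    refine le_iSup₂_of_le μ ⟨inferInstance, ?_, hup⟩ le_rfl
    have : {x : ℝ | A < |x|} = Sᶜ := by
      ext x; simp [hS, ← abs_le]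
    rw [this, hμ]
    simp [Measure.restrict_apply hSm.compl]
  have hlog : Real.log ((γ S)⁻¹).toReal ≤ 2 * T := by
    rw [ENNReal.toReal_inv]
    change Real.log (γ.real S)⁻¹ ≤ _
    refine (Real.log_le_sub_one_of_pos (by positivity)).trans ?_
    have : (γ.real S)⁻¹ ≤ 1 + 2 * γ.real Sᶜ := by
      rw [inv_le_iff_one_le_mul₀ hpp]
      nlinarith
    linarith
  refine (EReal.sub_le_sub le_rfl (hmain.trans hcap)).trans ?_
  rw [← EReal.coe_sub, EReal.coe_le_coe_iff, hvP]
  have hT0 : 0 ≤ T := hd0.trans hd2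
  have hq : 1 / 2 - (∫ x, x ^ 2 ∂μ + 1) / (2 * (1 + P)) ≤ T := by
    rw [sub_le_iff_le_add, ← sub_le_iff_le_add', le_div_iff₀ (by positivity)]
    nlinarith
  have hE := Real.exp_pos (-(A ^ 2) / (2 * P))
  have hfin : 3 * T ≤ 12 * (1 + P) * A ^ (2 : ℝ) * Real.exp (-(A ^ 2) / (2 * P)) := by
    rw [Real.rpow_two]
    have : A ^ 2 + P ≤ (1 + P) * A ^ 2 := by
      have : 1 ≤ A ^ 2 := one_le_pow₀ hA1
      nlinarith
    have := mul_le_mul_of_nonneg_right this hE.le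
    nlinarith
  linarith
end
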